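/- Let $m \geq 1$ and let $\mathbf{k} = (k_1, \ldots, k_s)$ be a sequence of positive integers with $k_i \leq m$ for each $i$, and set $k = \sum_{i=1}^s k_i$. Let $W_{m,\mathbf{k}}$ be the set of tuples $(A_1, \ldots, A_s)$ of complex matrices, with $A_i$ of size $m \times (m-k_i+1)$, such that for at least one index $i$ the matrix $A_i$ has full rank $m - k_i + 1$, regarded as a topological subspace of the product of the matrix spaces with the Euclidean topology. Then the homotopy group $\pi_{2k-1}$ of $W_{m,\mathbf{k}}$ at any basepoint is isomorphic to the group of integers $\mathbb{Z}$. -/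

import Mathlib

/-!
Stabilization sends a frame `B` of `q` vectors in `E` to the frame `(1, 0), (0, B₀), …` of `q + 1`
vectors in `ℂ × E`. The frames of `ℂ × E` whose first vector `c` avoids the half-line `ℝ≤0 × 0`
deform onto the stabilized ones: a linear automorphism of `ℂ × E` depending continuously on `c`
moves `c` to the first axis. The remaining frames have high codimension, so by general position
discarding them does not affect the homotopy groups in question, and this stays true for tuples in
which only one of the matrices has to have full rank. Hence the frame of `m - kᵢ + 1` vectors in
`ℂᵐ` may be replaced by a single vector of `ℂ^kᵢ`, one index `i` at a time; at the end the
condition says that a vector of `ℂᵏ` is nonzero, and `ℂᵏ ∖ 0` is a sphere `S²ᵏ⁻¹` up to homotopy.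

That `πₙ(ℝⁿ⁺¹ ∖ 0) = ℤ` comes from the covering `exp` of `ℂ ∖ 0` and suspension. The suspension is
surjective, and injective from `n = 2` on, by general position: a map into `E × ℝ` is perturbed
until its zeros on the two half-axes are separated by a graph. For `n = 1` injectivity holds
because a nullhomotopy of the suspended loop lifts to the Hopf line bundle.
-/

open Topology
open scoped unitInterval Topology.Homotopy ComplexConjugate

namespace TupleStiefel

section HomotopyGroups

variable {M N X Y Z : Type*} [TopologicalSpace X] [TopologicalSpace Y] [TopologicalSpace Z]

theorem homotopic_iff_exists {x : X} {f g : Ω^ N X x} :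
    GenLoop.Homotopic f g ↔ ∃ H : I × (N → I) → X, Continuous H ∧
      (∀ y, H (0, y) = f y) ∧ (∀ y, H (1, y) = g y) ∧
      ∀ t, ∀ y ∈ Cube.boundary N, H (t, y) = x := by
  constructor
  · rintro ⟨H⟩
    exact ⟨H, H.continuous, H.apply_zero, H.apply_one, fun t y hy ↦
      (H.eq_fst t hy).trans (f.2 y hy)⟩
  · rintro ⟨H, hH, h₀, h₁, hb⟩
    exact ⟨⟨⟨⟨H, hH⟩, h₀, h₁⟩, fun t y hy ↦ (hb t y hy).trans (f.2 y hy).symm⟩⟩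

theorem homotopic_subtype_iff_exists {S : Set X} {x : S} {f g : Ω^ N S x} :
    GenLoop.Homotopic f g ↔ ∃ H : I × (N → I) → X, Continuous H ∧ (∀ p, H p ∈ S) ∧
      (∀ y, H (0, y) = f y) ∧ (∀ y, H (1, y) = g y) ∧
      ∀ t, ∀ y ∈ Cube.boundary N, H (t, y) = x := by
  rw [homotopic_iff_exists]
  constructor
  · rintro ⟨H, hH, h₀, h₁, hb⟩
    exact ⟨fun p ↦ H p, continuous_subtype_val.comp hH, fun p ↦ (H p).2,
      fun y ↦ congrArg Subtype.val (h₀ y), fun y ↦ congrArg Subtype.val (h₁ y),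
      fun t y hy ↦ congrArg Subtype.val (hb t y hy)⟩
  · rintro ⟨H, hH, hS, h₀, h₁, hb⟩
    exact ⟨fun p ↦ ⟨H p, hS p⟩, hH.subtype_mk _, fun y ↦ Subtype.ext (h₀ y),
      fun y ↦ Subtype.ext (h₁ y), fun t y hy ↦ Subtype.ext (hb t y hy)⟩

/-- A map of the cube into `X` with values in the subset `S`, constant on the boundary, as a
generalized loop in `S`. -/
def loopOfMapsTo {S : Set X} {x : S} (f : (N → I) → X) (hf : Continuous f) (hS : ∀ y, f y ∈ S)
    (hb : ∀ y ∈ Cube.boundary N, f y = x) : Ω^ N S x :=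
  ⟨⟨fun y ↦ ⟨f y, hS y⟩, hf.subtype_mk _⟩, fun y hy ↦ Subtype.ext (hb y hy)⟩

@[simp]
theorem coe_loopOfMapsTo {S : Set X} {x : S} (f : (N → I) → X) (hf : Continuous f)
    (hS : ∀ y, f y ∈ S) (hb : ∀ y ∈ Cube.boundary N, f y = x) (y : N → I) :
    (loopOfMapsTo f hf hS hb : Ω^ N S x) y = f y := rfl

@[fun_prop]
theorem continuous_coe_loop {S : Set X} {x : S} (f : Ω^ N S x) : Continuous fun y ↦ (f y : X) :=
  continuous_subtype_val.comp f.1.continuous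

theorem coe_loop_of_mem_boundary {S : Set X} {x : S} (f : Ω^ N S x) {y : N → I}
    (hy : y ∈ Cube.boundary N) : (f y : X) = x :=
  congrArg Subtype.val (f.2 y hy)

theorem homotopicRel_of_forall_mem {S : Set Y} {T : Set X} {φ ψ : C(X, S)} (H : I × X → Y)
    (hH : Continuous H) (hS : ∀ p, H p ∈ S) (h₀ : ∀ y, H (0, y) = φ y) (h₁ : ∀ y, H (1, y) = ψ y)
    (hT : ∀ t, ∀ y ∈ T, H (t, y) = φ y) : φ.HomotopicRel ψ T :=
  ⟨⟨⟨⟨fun p ↦ ⟨H p, hS p⟩, hH.subtype_mk _⟩, fun y ↦ Subtype.ext (h₀ y),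
    fun y ↦ Subtype.ext (h₁ y)⟩, fun t y hy ↦ Subtype.ext (hT t y hy)⟩⟩

theorem homotopicRel_of_segment_subset {E : Type*} [AddCommGroup E] [Module ℝ E]
    [TopologicalSpace E] [IsTopologicalAddGroup E] [ContinuousSMul ℝ E] {S : Set E} {T : Set X}
    {φ ψ : C(X, S)} (h : ∀ y, segment ℝ (φ y : E) (ψ y) ⊆ S) (hT : ∀ y ∈ T, φ y = ψ y) :
    φ.HomotopicRel ψ T := by
  refine homotopicRel_of_forall_mem
    (fun p ↦ (1 - p.1 : ℝ) • (φ p.2 : E) + (p.1 : ℝ) • (ψ p.2 : E)) (by fun_prop) (fun p ↦ ?_)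
    (fun y ↦ by simp) (fun y ↦ by simp) (fun t y hy ↦ ?_)
  · exact h p.2 ⟨_, _, sub_nonneg.2 p.1.2.2, p.1.2.1, sub_add_cancel _ _, rfl⟩
  · simp only [hT y hy, ← add_smul, sub_add_cancel, one_smul]

theorem homotopic_of_segment_subset {E : Type*} [AddCommGroup E] [Module ℝ E] [TopologicalSpace E]
    [IsTopologicalAddGroup E] [ContinuousSMul ℝ E] {S : Set E} {x : S} {f g : Ω^ N S x}
    (h : ∀ y, segment ℝ (f y : E) (g y) ⊆ S) : GenLoop.Homotopic f g :=
  homotopicRel_of_segment_subset h fun y hy ↦ (f.2 y hy).trans (g.2 y hy).symm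

/-- The image of a generalized loop under a continuous map. -/
def mapLoop (φ : C(X, Y)) {x : X} {y : Y} (h : φ x = y) (f : Ω^ N X x) : Ω^ N Y y :=
  ⟨φ.comp f.1, fun t ht ↦ (congrArg φ (f.2 t ht)).trans h⟩

@[simp]
theorem mapLoop_apply (φ : C(X, Y)) {x : X} {y : Y} (h : φ x = y) (f : Ω^ N X x) (t : N → I) :
    mapLoop φ h f t = φ (f t) := rfl

theorem mapLoop_homotopic (φ : C(X, Y)) {x : X} {y : Y} (h : φ x = y) {f g : Ω^ N X x}
    (hfg : GenLoop.Homotopic f g) : GenLoop.Homotopic (mapLoop φ h f) (mapLoop φ h g) :=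
  ContinuousMap.HomotopicRel.comp_continuousMap hfg φ

variable [DecidableEq N]

theorem mapLoop_transAt (φ : C(X, Y)) {x : X} {y : Y} (h : φ x = y) (i : N) (f g : Ω^ N X x) :
    mapLoop φ h (GenLoop.transAt i f g) = GenLoop.transAt i (mapLoop φ h f) (mapLoop φ h g) := by
  ext t
  simp only [mapLoop_apply, GenLoop.transAt, GenLoop.coe_copy]
  split_ifs <;> rfl

variable [Nonempty N]

/-- The homomorphism of homotopy groups induced by an operation `T` on loops which respects
homotopy and turns concatenation in the direction `i` into concatenation in the direction `j`. -/
noncomputable def homOfLoopMap [DecidableEq M] [Nonempty M] {x : X} {y : Y}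
    (T : Ω^ M X x → Ω^ N Y y)
    (hT : ∀ f g, GenLoop.Homotopic f g → GenLoop.Homotopic (T f) (T g)) (i : M) (j : N)
    (hmul : ∀ f g, T (GenLoop.transAt i f g) = GenLoop.transAt j (T f) (T g)) :
    HomotopyGroup M X x →* HomotopyGroup N Y y :=
  MonoidHom.mk' (Quotient.map T hT) <| by
    rintro ⟨f⟩ ⟨g⟩
    have hX := HomotopyGroup.mul_spec (i := i) (p := f) (q := g)
    have hY := HomotopyGroup.mul_spec (i := j) (p := T f) (q := T g)
    exact (congrArg (Quotient.map T hT) hX).trans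
      ((congrArg (Quotient.mk _) (hmul g f)).trans hY.symm)

theorem homOfLoopMap_surjective [DecidableEq M] [Nonempty M] {x : X} {y : Y}
    {T : Ω^ M X x → Ω^ N Y y}
    {hT : ∀ f g, GenLoop.Homotopic f g → GenLoop.Homotopic (T f) (T g)} {i : M} {j : N}
    {hmul : ∀ f g, T (GenLoop.transAt i f g) = GenLoop.transAt j (T f) (T g)}
    (h : ∀ g, ∃ f, GenLoop.Homotopic (T f) g) :
    Function.Surjective (homOfLoopMap T hT i j hmul) := by
  rintro ⟨g⟩
  obtain ⟨f, hf⟩ := h g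
  exact ⟨⟦f⟧, Quotient.sound hf⟩

theorem homOfLoopMap_injective [DecidableEq M] [Nonempty M] {x : X} {y : Y}
    {T : Ω^ M X x → Ω^ N Y y}
    {hT : ∀ f g, GenLoop.Homotopic f g → GenLoop.Homotopic (T f) (T g)} {i : M} {j : N}
    {hmul : ∀ f g, T (GenLoop.transAt i f g) = GenLoop.transAt j (T f) (T g)}
    (h : ∀ f, GenLoop.Homotopic (T f) GenLoop.const → GenLoop.Homotopic f GenLoop.const) :
    Function.Injective (homOfLoopMap T hT i j hmul) := by
  refine (injective_iff_map_eq_one _).2 ?_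
  rintro ⟨f⟩ hf
  rw [HomotopyGroup.one_def] at hf ⊢
  exact Quotient.sound (h f (Quotient.exact hf))

/-- The functoriality of homotopy groups. -/
noncomputable def homotopyGroupMap (N : Type*) [DecidableEq N] [Nonempty N] (φ : C(X, Y))
    {x : X} {y : Y} (h : φ x = y) : HomotopyGroup N X x →* HomotopyGroup N Y y :=
  homOfLoopMap (mapLoop φ h) (fun _ _ ↦ mapLoop_homotopic φ h) (Classical.arbitrary N)
    (Classical.arbitrary N) (mapLoop_transAt φ h _)

theorem homotopyGroupMap_surjective {φ : C(X, Y)} {x : X} {y : Y} {h : φ x = y}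
    (hφ : ∀ g : Ω^ N Y y, ∃ f, GenLoop.Homotopic (mapLoop φ h f) g) :
    Function.Surjective (homotopyGroupMap N φ h) :=
  homOfLoopMap_surjective hφ

theorem homotopyGroupMap_injective {φ : C(X, Y)} {x : X} {y : Y} {h : φ x = y}
    (hφ : ∀ f : Ω^ N X x, GenLoop.Homotopic (mapLoop φ h f) GenLoop.const →
      GenLoop.Homotopic f GenLoop.const) :
    Function.Injective (homotopyGroupMap N φ h) :=
  homOfLoopMap_injective hφ

theorem homotopyGroupMap_congr {φ ψ : C(X, Y)} {x : X} {y : Y} (hφψ : φ.HomotopicRel ψ {x})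
    (h : φ x = y) (h' : ψ x = y) : homotopyGroupMap N φ h = homotopyGroupMap N ψ h' := by
  ext ⟨f⟩
  obtain ⟨F⟩ := hφψ
  have hf : GenLoop.Homotopic (mapLoop φ h f) (mapLoop ψ h' f) :=
    homotopic_iff_exists.2 ⟨fun p ↦ F (p.1, f p.2), by fun_prop, fun _ ↦ F.apply_zero _,
      fun _ ↦ F.apply_one _, fun t y hy ↦ (F.eq_fst t (f.2 y hy)).trans
        ((congrArg φ (f.2 y hy)).trans h)⟩
  exact Quotient.sound hf

theorem homotopyGroupMap_comp {φ : C(X, Y)} {ψ : C(Y, Z)} {x : X} {y : Y} {z : Z} (h : φ x = y)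
    (h' : ψ y = z) (h'' : ψ.comp φ x = z) : homotopyGroupMap N (ψ.comp φ) h'' =
      (homotopyGroupMap N ψ h').comp (homotopyGroupMap N φ h) := by
  ext ⟨f⟩
  rfl

theorem homotopyGroupMap_comp_eq_id {φ : C(X, Y)} {ψ : C(Y, X)} {x : X} {y : Y} (h : φ x = y)
    (h' : ψ y = x) (hψφ : ψ.comp φ = .id X) :
    (homotopyGroupMap N ψ h').comp (homotopyGroupMap N φ h) = .id _ := by
  rw [← homotopyGroupMap_comp (h'' := by simp [hψφ])]
  simp only [hψφ]
  ext ⟨f⟩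
  rfl

/-- The isomorphism of homotopy groups induced by a homeomorphism. -/
noncomputable def homotopyGroupCongr (φ : X ≃ₜ Y) {x : X} {y : Y} (h : φ x = y) :
    HomotopyGroup N X x ≃* HomotopyGroup N Y y :=
  have h' : φ.symm y = x := by simp [← h]
  (homotopyGroupMap N φ h).toMulEquiv (homotopyGroupMap N φ.symm h')
    (homotopyGroupMap_comp_eq_id h h' (by ext; simp))
    (homotopyGroupMap_comp_eq_id h' h (by ext; simp))

end HomotopyGroups

theorem nonempty_pi_one_puncturedPlane_mulEquiv (x : ({0}ᶜ : Set ℂ)) :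
    Nonempty (HomotopyGroup (Fin 1) ({0}ᶜ : Set ℂ) x ≃* Multiplicative ℤ) := by
  let period : ℂ := 2 * Real.pi * Complex.I
  have : Infinite (AddSubgroup.zmultiples period) := by
    refine (infinite_zmultiples.2 (not_isOfFinAddOrder_of_isAddTorsionFree ?_)).to_subtype
    simp [period, Real.pi_ne_zero]
  let lift : (fun z : ℂ ↦ (⟨Complex.exp z, Complex.exp_ne_zero z⟩ : {z : ℂ // z ≠ 0})) ⁻¹' {x} :=
    ⟨Complex.log x, Subtype.ext (Complex.exp_log x.2)⟩
  let deckGroup := Complex.isAddQuotientCoveringMap_exp.fundamentalGroupEquiv lift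
  exact ⟨HomotopyGroup.pi1MulEquivFundamentalGroup.trans <| deckGroup.trans <|
    (MulEquiv.inv' _).symm.trans <| AddEquiv.toMultiplicative intCyclicAddEquiv.symm⟩

section GeneralPosition

variable {E P K : Type*} [NormedAddCommGroup E] [NormedSpace ℝ E]
  [NormedAddCommGroup P] [NormedSpace ℝ P] [FiniteDimensional ℝ P]
  [TopologicalSpace K]

theorem exists_forall_segment_subset [CompactSpace K] {W : Set E} (hW : IsOpen W) {f : K → E}
    (hf : Continuous f) (hfW : ∀ x, f x ∈ W) :
    ∃ η > 0, ∀ x v, ‖v - f x‖ < η → segment ℝ (f x) v ⊆ W := by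
  obtain ⟨η, hη, hηW⟩ := (isCompact_range hf).exists_thickening_subset_open hW
    (Set.range_subset_iff.2 hfW)
  refine ⟨η, hη, fun x v hv ↦ ?_⟩
  have hball : Metric.ball (f x) η ⊆ W :=
    (Metric.ball_subset_thickening (Set.mem_range_self x) η).trans hηW
  exact ((convex_ball (f x) η).segment_subset (Metric.mem_ball_self hη)
    (mem_ball_iff_norm.2 hv)).trans hball

theorem norm_smul_le_of_mem_unitInterval {c : ℝ} (hc : c ∈ I) (v : E) : ‖c • v‖ ≤ ‖v‖ := by
  rw [norm_smul, Real.norm_of_nonneg hc.1]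
  exact mul_le_of_le_one_left (norm_nonneg _) hc.2

variable [FiniteDimensional ℝ E]

theorem exists_contDiff_approx_of_isClosedEmbedding {ι : K → P} (hι : IsClosedEmbedding ι)
    {f : K → E} (hf : Continuous f) {ε : ℝ} (hε : 0 < ε) :
    ∃ G : P → E, ContDiff ℝ 1 G ∧ ∀ x, ‖G (ι x) - f x‖ < ε := by
  have : TietzeExtension E := .of_tvs ℝ
  obtain ⟨g, hg⟩ := ContinuousMap.exists_extension hι ⟨f, hf⟩
  obtain ⟨G, hG, hGg, -⟩ := g.continuous.exists_contDiff_approx 1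
    (ε := fun _ ↦ ε) continuous_const fun _ ↦ hε
  refine ⟨G, hG, fun x ↦ ?_⟩
  have hgx : g (ι x) = f x := DFunLike.congr_fun hg x
  simpa [hgx, dist_eq_norm] using hGg (ι x)

theorem exists_norm_lt_notMem_of_dimH_lt {S : Set E} (hS : dimH S < Module.finrank ℝ E) {ε : ℝ}
    (hε : 0 < ε) : ∃ v : E, ‖v‖ < ε ∧ v ∉ S := by
  obtain ⟨v, hv, hvε⟩ := (dense_compl_of_dimH_lt_finrank hS).exists_dist_lt 0 hε
  exact ⟨v, by simpa using hvε, hv⟩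

/-- The set `D` is covered by countably many `C¹` images of `ℝ^d`: the notion of dimension at most
`d` for which general position arguments work, and which is easily checked for determinantal
varieties. -/
def C1DimLE (D : Set E) (d : ℕ) : Prop :=
  ∃ p : ℕ → (Fin d → ℝ) → E, (∀ i, ContDiff ℝ 1 (p i)) ∧ D ⊆ ⋃ i, Set.range (p i)

theorem exists_translate_avoiding {G : P → E} (hG : ContDiff ℝ 1 G) {Z : Set E} {d : ℕ}
    (hZ : C1DimLE Z d) (hd : Module.finrank ℝ P + d < Module.finrank ℝ E) {ε : ℝ} (hε : 0 < ε) :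
    ∃ v : E, ‖v‖ < ε ∧ ∀ x, G x + v ∉ Z := by
  obtain ⟨p, hp, hZp⟩ := hZ
  let differences : Set E := ⋃ i, Set.range fun q : P × (Fin d → ℝ) ↦ p i q.2 - G q.1
  have hdim : dimH differences < Module.finrank ℝ E := by
    refine (dimH_iUnion _).trans_lt ((iSup_le fun i ↦ ?_).trans_lt (Nat.cast_lt.2 hd))
    have hC1 : ContDiff ℝ 1 fun q : P × (Fin d → ℝ) ↦ p i q.2 - G q.1 :=
      ((hp i).comp contDiff_snd).sub (hG.comp contDiff_fst)
    simpa using hC1.dimH_range_le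
  obtain ⟨v, hvε, hv⟩ := exists_norm_lt_notMem_of_dimH_lt hdim hε
  refine ⟨v, hvε, fun x hx ↦ hv ?_⟩
  obtain ⟨i, y, hy⟩ := Set.mem_iUnion.1 (hZp hx)
  exact Set.mem_iUnion.2 ⟨i, (x, y), by simp [hy]⟩

theorem exists_approx_avoiding {ι : K → P} (hι : IsClosedEmbedding ι) {Z : Set E} {d : ℕ}
    (hZ : C1DimLE Z d) (hd : Module.finrank ℝ P + d < Module.finrank ℝ E) {f : K → E}
    (hf : Continuous f) {ε : ℝ} (hε : 0 < ε) :
    ∃ g : K → E, Continuous g ∧ (∀ x, ‖g x - f x‖ < ε) ∧ ∀ x, g x ∉ Z := by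
  obtain ⟨G, hG, hGf⟩ := exists_contDiff_approx_of_isClosedEmbedding hι hf (half_pos hε)
  obtain ⟨v, hv, hvZ⟩ := exists_translate_avoiding hG hZ hd (half_pos hε)
  refine ⟨fun x ↦ G (ι x) + v, (hG.continuous.comp hι.continuous).add continuous_const,
    fun x ↦ ?_, fun x ↦ hvZ (ι x)⟩
  calc ‖G (ι x) + v - f x‖ = ‖(G (ι x) - f x) + v‖ := by congr 1; abel
    _ ≤ ‖G (ι x) - f x‖ + ‖v‖ := norm_add_le _ _
    _ < ε := by linarith [hGf x]

theorem exists_approx_avoiding_rel [CompactSpace K] {ι : K → P} (hι : IsClosedEmbedding ι)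
    {W W₀ : Set E} (hW : IsOpen W) (hW₀ : IsOpen W₀) {d : ℕ} (hdim : C1DimLE (W \ W₀) d)
    (hd : Module.finrank ℝ P + d < Module.finrank ℝ E) {x₀ : E} (hx₀ : x₀ ∈ W₀) {f : K → E}
    (hf : Continuous f) (hfW : ∀ x, f x ∈ W) {ε : ℝ} (hε : 0 < ε) :
    ∃ f' : K → E, Continuous f' ∧ (∀ x, f' x ∈ W₀) ∧ (∀ x, f x = x₀ → f' x = x₀) ∧
      ∀ x, ‖f' x - f x‖ < ε := by
  obtain ⟨r, hr, hrW₀⟩ := Metric.isOpen_iff.1 hW₀ x₀ hx₀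
  obtain ⟨η, hη, hηW⟩ := exists_forall_segment_subset hW hf hfW
  let δ := r / 3
  have hδ : 0 < δ := by positivity
  obtain ⟨g, hg, hgf, hgZ⟩ := exists_approx_avoiding hι hdim hd hf (lt_min (lt_min hη hδ) hε)
  let κ : K → ℝ := fun x ↦ Real.smoothTransition (‖f x - x₀‖ / δ - 1)
  have hκ : Continuous κ := Real.smoothTransition.continuous.comp (by fun_prop)
  have hκI : ∀ x, κ x ∈ I := fun x ↦
    ⟨Real.smoothTransition.nonneg _, Real.smoothTransition.le_one _⟩
  let f' : K → E := fun x ↦ f x + κ x • (g x - f x)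
  have hf' : ∀ x, ‖f' x - f x‖ < min (min η δ) ε := fun x ↦ by
    simpa [f'] using (norm_smul_le_of_mem_unitInterval (hκI x) (g x - f x)).trans_lt (hgf x)
  simp only [lt_min_iff] at hf' hgf
  refine ⟨f', by fun_prop, fun x ↦ ?_, fun x hx ↦ ?_, fun x ↦ (hf' x).2⟩
  · rcases le_or_gt (2 * δ) ‖f x - x₀‖ with hfar | hnear
    · have hκx : κ x = 1 := Real.smoothTransition.one_of_one_le <| by
        rw [le_sub_iff_add_le, le_div_iff₀ hδ]; linarith
      have hgx : f' x = g x := by simp [f', hκx]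
      by_contra hx
      exact hgZ x ⟨hηW x _ (hgf x).1.1 (right_mem_segment ..), hgx ▸ hx⟩
    · refine hrW₀ (mem_ball_iff_norm.2 ?_)
      calc ‖f' x - x₀‖ ≤ ‖f' x - f x‖ + ‖f x - x₀‖ := norm_sub_le_norm_sub_add_norm_sub ..
        _ < δ + 2 * δ := add_lt_add (hf' x).1.2 hnear
        _ = r := by ring
  · have hκx : κ x = 0 := Real.smoothTransition.zero_of_nonpos (by simp [hx])
    simp [f', hκx, hx]

theorem isClosedEmbedding_cube (N : Type*) :
    IsClosedEmbedding fun (y : N → I) (i : N) ↦ (y i : ℝ) :=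
  Continuous.isClosedEmbedding (by fun_prop) fun _ _ h ↦
    funext fun i ↦ Subtype.ext (congrFun h i)

theorem isClosedEmbedding_interval : IsClosedEmbedding ((↑) : I → ℝ) :=
  isClosed_Icc.isClosedEmbedding_subtypeVal

variable {N : Type*} [Fintype N] {W W₀ : Set E} {d : ℕ}

theorem exists_mapLoop_inclusion_homotopic (hsub : W₀ ⊆ W) (hW : IsOpen W) (hW₀ : IsOpen W₀)
    (hdim : C1DimLE (W \ W₀) d) (hd : Fintype.card N + d < Module.finrank ℝ E) {x : W₀} {y : W}
    (h : ContinuousMap.inclusion hsub x = y) (f : Ω^ N W y) :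
    ∃ g : Ω^ N W₀ x, GenLoop.Homotopic (mapLoop (.inclusion hsub) h g) f := by
  subst h
  obtain ⟨η, hη, hηW⟩ := exists_forall_segment_subset hW (continuous_coe_loop f) fun y ↦ (f y).2
  obtain ⟨f', hf', hf'W₀, hf'x, hf'f⟩ := exists_approx_avoiding_rel (isClosedEmbedding_cube N)
    hW hW₀ hdim (by simpa using hd) x.2 (continuous_coe_loop f) (fun y ↦ (f y).2) hη
  refine ⟨loopOfMapsTo f' hf' hf'W₀ fun y hy ↦ hf'x y (coe_loop_of_mem_boundary f hy), ?_⟩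
  exact .symm <| homotopic_of_segment_subset fun y ↦ hηW y _ (hf'f y)

theorem homotopic_const_of_mapLoop_inclusion (hsub : W₀ ⊆ W) (hW : IsOpen W) (hW₀ : IsOpen W₀)
    (hdim : C1DimLE (W \ W₀) d) (hd : Fintype.card N + 1 + d < Module.finrank ℝ E) {x : W₀} {y : W}
    (h : ContinuousMap.inclusion hsub x = y) {f : Ω^ N W₀ x}
    (hf : GenLoop.Homotopic (mapLoop (.inclusion hsub) h f) GenLoop.const) :
    GenLoop.Homotopic f GenLoop.const := by
  subst h
  obtain ⟨H, hH, hHW, hH₀, hH₁, hHb⟩ := homotopic_subtype_iff_exists.1 hf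
  obtain ⟨η, hη, hηW₀⟩ :=
    exists_forall_segment_subset hW₀ (continuous_coe_loop f) fun y ↦ (f y).2
  obtain ⟨H', hH', hH'W₀, hH'x, hH'H⟩ := exists_approx_avoiding_rel
    (isClosedEmbedding_interval.prodMap (isClosedEmbedding_cube N)) hW hW₀ hdim
    (by simpa [add_comm] using hd) x.2 hH hHW hη
  have hH'b : ∀ t, ∀ y ∈ Cube.boundary N, H' (t, y) = x := fun t y hy ↦ hH'x _ (hHb t y hy)
  let f' : Ω^ N W₀ x := loopOfMapsTo (fun y ↦ H' (0, y)) (by fun_prop) (fun y ↦ hH'W₀ _) (hH'b 0)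
  have hff' : GenLoop.Homotopic f f' := homotopic_of_segment_subset fun y ↦
    hηW₀ y _ (by have := hH'H (0, y); rwa [hH₀] at this)
  exact hff'.trans <| homotopic_subtype_iff_exists.2
    ⟨H', hH', hH'W₀, fun y ↦ rfl, fun y ↦ hH'x _ (hH₁ y), hH'b⟩

theorem homotopyGroupMap_inclusion_bijective [DecidableEq N] [Nonempty N] (hsub : W₀ ⊆ W)
    (hW : IsOpen W) (hW₀ : IsOpen W₀) (hdim : C1DimLE (W \ W₀) d)
    (hd : Fintype.card N + 1 + d < Module.finrank ℝ E) {x : W₀} {y : W}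
    (h : ContinuousMap.inclusion hsub x = y) :
    Function.Bijective (homotopyGroupMap N (.inclusion hsub) h) :=
  ⟨homotopyGroupMap_injective fun _ ↦
      homotopic_const_of_mapLoop_inclusion hsub hW hW₀ hdim hd h,
    homotopyGroupMap_surjective
      (exists_mapLoop_inclusion_homotopic hsub hW hW₀ hdim (by lia) h)⟩

end GeneralPosition

section Separation

variable {E P B : Type*} [NormedAddCommGroup E] [NormedSpace ℝ E] [FiniteDimensional ℝ E]
  [NormedAddCommGroup P] [NormedSpace ℝ P] [FiniteDimensional ℝ P]
  [TopologicalSpace B]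

/- For `s < s'` the equations `G (b, s) + v + s • w = 0 = G (b, s') + v + s' • w` determine `(v, w)`
as a `C¹` function of `(b, s, s')`, so that they fail for almost every `(v, w)`. -/
theorem exists_affine_shift_zero_subsingleton {G : P × ℝ → E} (hG : ContDiff ℝ 1 G)
    (hd : Module.finrank ℝ P + 2 < 2 * Module.finrank ℝ E) {ε : ℝ} (hε : 0 < ε) :
    ∃ v w : E, ‖v‖ < ε ∧ ‖w‖ < ε ∧ ∀ b, {s | G (b, s) + v + s • w = 0}.Subsingleton := by
  let U : Set (P × ℝ × ℝ) := {q | q.2.1 - q.2.2 < 0}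
  let slope : P × ℝ × ℝ → E := fun q ↦
    -((q.2.1 - q.2.2)⁻¹ • (G (q.1, q.2.1) - G (q.1, q.2.2)))
  let solution : P × ℝ × ℝ → E × E := fun q ↦ (-(G (q.1, q.2.1) + q.2.1 • slope q), slope q)
  have hU : Convex ℝ U := convex_halfSpace_lt ⟨by intros; simp; ring, by intros; simp; ring⟩ 0
  have hG₁ : ContDiff ℝ 1 fun q : P × ℝ × ℝ ↦ G (q.1, q.2.1) := hG.comp (by fun_prop)
  have hG₂ : ContDiff ℝ 1 fun q : P × ℝ × ℝ ↦ G (q.1, q.2.2) := hG.comp (by fun_prop)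
  have hslope : ContDiffOn ℝ 1 slope U :=
    ((ContDiffOn.inv (by fun_prop) fun q hq ↦ ne_of_lt hq).smul (hG₁.sub hG₂).contDiffOn).neg
  have hsolution : ContDiffOn ℝ 1 solution U :=
    (hG₁.contDiffOn.add (ContDiffOn.smul (by fun_prop) hslope)).neg.prodMk hslope
  have hdim : dimH (solution '' U) < Module.finrank ℝ (E × E) := by
    refine ((hsolution.dimH_image_le hU subset_rfl).trans
      ((dimH_mono (Set.subset_univ U)).trans (Real.dimH_univ_eq_finrank _).le)).trans_lt
      (Nat.cast_lt.2 ?_)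
    simp only [Module.finrank_prod, Module.finrank_self]
    lia
  obtain ⟨⟨v, w⟩, hvw, hnot⟩ := exists_norm_lt_notMem_of_dimH_lt hdim hε
  rw [Prod.norm_def, max_lt_iff] at hvw
  have hlt : ∀ b s s', s < s' → G (b, s) + v + s • w = 0 → G (b, s') + v + s' • w ≠ 0 := by
    intro b s s' hss hs hs'
    have hsub : G (b, s) - G (b, s') = -((s - s') • w) := by
      rw [eq_neg_iff_add_eq_zero, sub_smul, ← sub_eq_zero.2 (hs.trans hs'.symm)]
      abel
    have hw : slope (b, s, s') = w := by
      simp [slope, hsub, smul_smul, inv_mul_cancel₀ (sub_ne_zero.2 hss.ne)]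
    refine hnot ⟨(b, s, s'), sub_neg.2 hss, Prod.ext ?_ hw⟩
    simp only [solution, hw]
    rw [neg_eq_iff_add_eq_zero, ← hs]
    abel
  refine ⟨v, w, hvw.1, hvw.2, fun b s hs s' hs' ↦ ?_⟩
  rcases lt_trichotomy s s' with h | h | h
  exacts [(hlt b s s' h hs hs').elim, h, (hlt b s' s h hs' hs).elim]

theorem exists_approx_zero_subsingleton {ι : B → P} (hι : IsClosedEmbedding ι)
    (hd : Module.finrank ℝ P + 2 < 2 * Module.finrank ℝ E) {F : B × I → E} (hF : Continuous F)
    {ε : ℝ} (hε : 0 < ε) :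
    ∃ Q : B × I → E, Continuous Q ∧ (∀ p, ‖Q p - F p‖ < ε) ∧
      ∀ b, {s | Q (b, s) = 0}.Subsingleton := by
  have hε₃ : 0 < ε / 3 := by positivity
  obtain ⟨G, hG, hGF⟩ :=
    exists_contDiff_approx_of_isClosedEmbedding (hι.prodMap isClosedEmbedding_interval) hF hε₃
  obtain ⟨v, w, hv, hw, hvw⟩ := exists_affine_shift_zero_subsingleton hG hd hε₃
  have hιc := hι.continuous
  have hGc := hG.continuous
  refine ⟨fun p ↦ G (ι p.1, p.2) + v + (p.2 : ℝ) • w, by fun_prop, fun p ↦ ?_,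
    fun b s hs s' hs' ↦ Subtype.ext (hvw (ι b) hs hs')⟩
  have hGFp : ‖G (ι p.1, p.2) - F p‖ < ε / 3 := hGF p
  calc ‖G (ι p.1, p.2) + v + (p.2 : ℝ) • w - F p‖
      = ‖(G (ι p.1, p.2) - F p) + v + (p.2 : ℝ) • w‖ := by congr 1; abel
    _ ≤ ‖G (ι p.1, p.2) - F p‖ + ‖v‖ + ‖(p.2 : ℝ) • w‖ := norm_add₃_le
    _ < ε := by linarith [norm_smul_le_of_mem_unitInterval p.2.2 w]

theorem exists_perturbation_zero_subsingleton {ι : B → P} (hι : IsClosedEmbedding ι)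
    (hd : Module.finrank ℝ P + 2 < 2 * Module.finrank ℝ E) {F : B × I → E} (hF : Continuous F)
    {δ : ℝ} (hδ : 0 < δ) :
    ∃ F' : B × I → E, Continuous F' ∧ (∀ p, 2 * δ ≤ ‖F p‖ → F' p = F p) ∧
      ∀ b, {s | F' (b, s) = 0}.Subsingleton := by
  obtain ⟨Q, hQ, hQF, hQ₀⟩ := exists_approx_zero_subsingleton hι hd hF hδ
  let κ : B × I → ℝ := fun p ↦ 1 - Real.smoothTransition (‖F p‖ / δ - 1)
  have hκ : Continuous κ :=
    continuous_const.sub (Real.smoothTransition.continuous.comp (by fun_prop))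
  have hκI : ∀ p, κ p ∈ I := fun p ↦ ⟨sub_nonneg.2 (Real.smoothTransition.le_one _),
    sub_le_self _ (Real.smoothTransition.nonneg _)⟩
  let F' : B × I → E := fun p ↦ F p + κ p • (Q p - F p)
  have hzero : ∀ p, F' p = 0 → Q p = 0 := by
    intro p hp
    have hFp : F p = -(κ p • (Q p - F p)) := eq_neg_of_add_eq_zero_left hp
    have hFδ : ‖F p‖ < δ := by
      rw [hFp, norm_neg]
      exact (norm_smul_le_of_mem_unitInterval (hκI p) _).trans_lt (hQF p)
    have hκp : κ p = 1 := by
      simp only [κ, sub_eq_self]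
      exact Real.smoothTransition.zero_of_nonpos (sub_nonpos.2 ((div_le_one hδ).2 hFδ.le))
    simpa [F', hκp] using hp
  refine ⟨F', by fun_prop, fun p hp ↦ ?_, fun b ↦ (hQ₀ b).anti fun s ↦ hzero (b, s)⟩
  have hκp : κ p = 0 := sub_eq_zero.2 <| Eq.symm <| Real.smoothTransition.one_of_one_le <| by
    rwa [le_sub_iff_add_le, one_add_one_eq_two, le_div_iff₀ hδ]
  simp [F', hκp]

theorem exists_separating_function [CompactSpace B] [T2Space B] {Z : Set (B × I)}
    (hZ : IsClosed Z) (hsub : ∀ b, {s | (b, s) ∈ Z}.Subsingleton) (hZ₀ : ∀ b, (b, 0) ∉ Z)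
    (hZ₁ : ∀ b, (b, 1) ∉ Z) {h : B × I → ℝ} (hh : Continuous h) (hne : ∀ p ∈ Z, h p ≠ 0) :
    ∃ l : C(B, I), ∀ p ∈ Z, 0 < (p.2 - l p.1 : ℝ) * h p := by
  have hclosed : ∀ C : Set (B × I), IsClosed C → IsClosed (Prod.fst '' (Z ∩ C)) := fun C hC ↦
    ((hZ.inter hC).isCompact.image continuous_fst).isClosed
  have hdisj : Disjoint (Prod.fst '' (Z ∩ {p | 0 ≤ h p})) (Prod.fst '' (Z ∩ {p | h p ≤ 0})) := by
    rw [Set.disjoint_left]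
    rintro b ⟨⟨b, s⟩, ⟨hs, hpos⟩, rfl⟩ ⟨⟨b', s'⟩, ⟨hs', hneg⟩, rfl : b' = b⟩
    obtain rfl : s = s' := hsub b' hs hs'
    exact hne _ hs (le_antisymm hneg hpos)
  obtain ⟨l, hl₀, hl₁, hl⟩ := exists_continuous_zero_one_of_isClosed
    (hclosed _ (isClosed_le continuous_const hh)) (hclosed _ (isClosed_le hh continuous_const))
    hdisj
  refine ⟨⟨fun b ↦ ⟨l b, hl b⟩, l.continuous.subtype_mk _⟩, ?_⟩
  rintro ⟨b, s⟩ hs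
  rcases lt_or_gt_of_ne (hne _ hs) with hneg | hpos
  · have hlb : l b = 1 := hl₁ ⟨(b, s), ⟨hs, hneg.le⟩, rfl⟩
    have hs₁ : s < 1 := unitInterval.lt_one_iff_ne_one.2 fun h ↦ hZ₁ b (h ▸ hs)
    exact mul_pos_of_neg_of_neg (by simpa [hlb] using hs₁) hneg
  · have hlb : l b = 0 := hl₀ ⟨(b, s), ⟨hs, hpos.le⟩, rfl⟩
    have hs₀ : 0 < s := unitInterval.pos_iff_ne_zero.2 fun h ↦ hZ₀ b (h ▸ hs)
    exact mul_pos (by simpa [hlb] using hs₀) hpos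

/-- The sign of `r` separates the zeros of the first component of `f` on which the second component
is positive from those on which it is negative. In particular `f` has no zeros. -/
def IsSeparatedBy {X : Type*} (f : X → E × ℝ) (r : X → ℝ) : Prop :=
  ∀ x, (f x).1 = 0 → 0 < r x * (f x).2

theorem exists_isSeparatedBy [CompactSpace B] [T2Space B] {ι : B → P} (hι : IsClosedEmbedding ι)
    (hd : Module.finrank ℝ P + 2 < 2 * Module.finrank ℝ E) {f : B × I → E × ℝ} (hf : Continuous f)
    (hne : ∀ p, f p ≠ 0) (hf₀ : ∀ b, (f (b, 0)).2 = 0) (hf₁ : ∀ b, (f (b, 1)).2 = 0) :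
    ∃ (f' : B × I → E × ℝ) (l : C(B, I)), Continuous f' ∧
      IsSeparatedBy f' (fun p ↦ p.2 - l p.1) ∧ (∀ p, (f' p).2 = (f p).2) ∧
      ∀ p, (f p).2 = 0 → f' p = f p := by
  obtain ⟨η, hη, hηf⟩ := isCompact_univ.exists_forall_le' hf.norm.continuousOn
    fun p _ ↦ norm_pos_iff.2 (hne p)
  obtain ⟨F, hF, hFf, hF₀⟩ := exists_perturbation_zero_subsingleton hι hd hf.fst (half_pos hη)
  have heq : ∀ p, (f p).2 = 0 → F p = (f p).1 := fun p hp ↦ hFf p <| by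
    simpa [mul_div_cancel₀, Prod.norm_def, hp] using hηf p trivial
  have hF' : ∀ p, F p = 0 → (f p).2 ≠ 0 := fun p hp h ↦
    hne p (Prod.ext ((heq p h).symm.trans hp) h)
  obtain ⟨l, hl⟩ := exists_separating_function (isClosed_eq hF continuous_const) hF₀
    (fun b hb ↦ hF' _ hb (hf₀ b)) (fun b hb ↦ hF' _ hb (hf₁ b)) hf.snd hF'
  exact ⟨fun p ↦ (F p, (f p).2), l, hF.prodMk hf.snd, hl, fun _ ↦ rfl,
    fun p hp ↦ Prod.ext (heq p hp) rfl⟩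

end Separation

section StackedLoops

variable {X : Type*} [TopologicalSpace X] {n : ℕ} {S : Set X} {x : S}

theorem mem_boundary_succ_iff {y : Fin (n + 1) → I} :
    y ∈ Cube.boundary (Fin (n + 1)) ↔
      y 0 = 0 ∨ y 0 = 1 ∨ Fin.tail y ∈ Cube.boundary (Fin n) := by
  simp only [Cube.boundary, Set.mem_ofPred_eq, Fin.exists_fin_succ, Fin.tail, or_assoc]

/-- The map `f` on `(Fin n → I) × I` has the value `x` on the boundary. -/
def IsBasedAt (f : (Fin n → I) × I → X) (x : X) : Prop :=
  ∀ b s, s = 0 ∨ s = 1 ∨ b ∈ Cube.boundary (Fin n) → f (b, s) = x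

/-- A map on `(Fin n → I) × I` as a generalized loop, the last factor becoming the coordinate `0`
of the cube. -/
def stackLoop (f : (Fin n → I) × I → X) (hf : Continuous f) (hS : ∀ p, f p ∈ S)
    (hx : IsBasedAt f x) : Ω^ (Fin (n + 1)) S x :=
  loopOfMapsTo (fun y ↦ f (Fin.tail y, y 0)) (by fun_prop) (fun _ ↦ hS _)
    fun _ hy ↦ hx _ _ (mem_boundary_succ_iff.1 hy)

@[simp]
theorem coe_stackLoop (f : (Fin n → I) × I → X) (hf : Continuous f) (hS : ∀ p, f p ∈ S)
    (hx : IsBasedAt f x) (y : Fin (n + 1) → I) :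
    (stackLoop f hf hS hx y : X) = f (Fin.tail y, y 0) := rfl

theorem isBasedAt_loop_cons (f : Ω^ (Fin (n + 1)) S x) :
    IsBasedAt (fun p : (Fin n → I) × I ↦ (f (Fin.cons p.2 p.1) : X)) x := fun b s h ↦
  coe_loop_of_mem_boundary f (mem_boundary_succ_iff.2 (by simpa using h))

@[fun_prop]
theorem continuous_convexComb {Z : Type*} [TopologicalSpace Z] {f g t : Z → I} (hf : Continuous f)
    (hg : Continuous g) (ht : Continuous t) :
    Continuous fun z ↦ Set.Icc.convexComb (f z) (g z) (t z) := by
  unfold Set.Icc.convexComb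
  fun_prop

theorem homotopic_stackLoop_comp {f : (Fin n → I) × I → X} (hf : Continuous f)
    (hS : ∀ p, f p ∈ S) (hx : IsBasedAt f x) {ρ : (Fin n → I) × I → I} (hρ : Continuous ρ)
    (hρ₀ : ∀ b, ρ (b, 0) = 0) (hρ₁ : ∀ b, ρ (b, 1) = 1) :
    ∃ hx', GenLoop.Homotopic (stackLoop f hf hS hx)
      (stackLoop (fun p ↦ f (p.1, ρ p)) (by fun_prop) (fun _ ↦ hS _) hx') := by
  have hρx : ∀ t, IsBasedAt (fun p ↦ f (p.1, Set.Icc.convexComb p.2 (ρ p) t)) x := by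
    rintro t b s (rfl | rfl | hb)
    · exact hx _ _ (.inl (by simp [hρ₀]))
    · exact hx _ _ (.inr (.inl (by simp [hρ₁])))
    · exact hx _ _ (.inr (.inr hb))
  refine ⟨by simpa using hρx 1, homotopic_subtype_iff_exists.2
    ⟨fun q ↦ f (Fin.tail q.2, Set.Icc.convexComb (q.2 0) (ρ (Fin.tail q.2, q.2 0)) q.1),
      by fun_prop, fun _ ↦ hS _, fun y ↦ by simp, fun y ↦ by simp,
      fun t y hy ↦ hρx t _ _ (mem_boundary_succ_iff.1 hy)⟩⟩

end StackedLoops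

section Suspension

variable {E : Type*} [NormedAddCommGroup E]

/-- The base point `(e, 0)` of the suspension. -/
def suspendBase (e : ({0}ᶜ : Set E)) : ({0}ᶜ : Set (E × ℝ)) :=
  ⟨(e, 0), fun h ↦ e.2 (congrArg Prod.fst h)⟩

@[simp]
theorem coe_suspendBase (e : ({0}ᶜ : Set E)) : (suspendBase e : E × ℝ) = ((e : E), 0) := rfl

variable [NormedSpace ℝ E] {n : ℕ}

/-- A model of the suspension of the map `z`, as a point of `E × ℝ`: for fixed `z` it describes a
closed curve based at `(e, 0)` which meets the axis `{0} × ℝ` at most in one point on each side of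
`s = 1 / 2`, passes through `(z, 0)` at `s = 1 / 2`, and is constant if `z = e`. -/
noncomputable def suspendVec (e z : E) (s : ℝ) : E × ℝ :=
  ((1 - |2 * s - 1|) • z + |2 * s - 1| • e, (2 * s - 1) * (1 - |2 * s - 1|) * ‖z - e‖)

@[simp]
theorem suspendVec_zero (e z : E) : suspendVec e z 0 = (e, 0) := by simp [suspendVec]

@[simp]
theorem suspendVec_one (e z : E) : suspendVec e z 1 = (e, 0) := by norm_num [suspendVec]

@[simp]
theorem suspendVec_self (e : E) (s : ℝ) : suspendVec e e s = (e, 0) := by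
  simp [suspendVec, ← add_smul]

@[simp]
theorem suspendVec_half (e z : E) : suspendVec e z (1 / 2) = (z, 0) := by simp [suspendVec]

@[fun_prop]
theorem continuous_suspendVec {Z : Type*} [TopologicalSpace Z] (e : E) {z : Z → E} {s : Z → ℝ}
    (hz : Continuous z) (hs : Continuous s) : Continuous fun x ↦ suspendVec e (z x) (s x) := by
  unfold suspendVec
  fun_prop

theorem suspendVec_ne_zero {e z : E} (he : e ≠ 0) (hz : z ≠ 0) (s : ℝ) :
    suspendVec e z s ≠ 0 := by
  intro h
  have h₁ : (1 - |2 * s - 1|) • z + |2 * s - 1| • e = 0 := congrArg Prod.fst h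
  have h₂ : (2 * s - 1) * (1 - |2 * s - 1|) * ‖z - e‖ = 0 := congrArg Prod.snd h
  rcases mul_eq_zero.1 h₂ with h₃ | hze
  · rcases mul_eq_zero.1 h₃ with hs | hs
    · exact hz (by simpa [hs] using h₁)
    · exact he (by simpa [← sub_eq_zero.1 hs] using h₁)
  · obtain rfl : z = e := sub_eq_zero.1 (norm_eq_zero.1 hze)
    exact hz (by simpa [← add_smul] using h₁)

theorem mul_suspendVec_snd_pos {e z : E} {s : ℝ} (hs : s ∈ I) (h : (suspendVec e z s).2 ≠ 0) :
    0 < (s - 1 / 2) * (suspendVec e z s).2 := by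
  have habs : |2 * s - 1| ≤ 1 := abs_le.2 ⟨by linarith [hs.1], by linarith [hs.2]⟩
  have hs_half : s - 1 / 2 ≠ 0 := fun h' ↦ h (by
    rw [sub_eq_zero.1 h', suspendVec_half])
  refine lt_of_le_of_ne ?_ (mul_ne_zero hs_half h).symm
  calc (0 : ℝ) ≤ 2 * (s - 1 / 2) ^ 2 * ((1 - |2 * s - 1|) * ‖z - e‖) :=
        mul_nonneg (by positivity) (mul_nonneg (sub_nonneg.2 habs) (norm_nonneg _))
    _ = (s - 1 / 2) * (suspendVec e z s).2 := by simp only [suspendVec]; ring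

variable {e : ({0}ᶜ : Set E)}

/-- The suspension of a loop in `E ∖ 0`, as a loop in `(E × ℝ) ∖ 0`. -/
noncomputable def suspendLoop (g : Ω^ (Fin n) ({0}ᶜ : Set E) e) :
    Ω^ (Fin (n + 1)) ({0}ᶜ : Set (E × ℝ)) (suspendBase e) :=
  stackLoop (fun p ↦ suspendVec (e : E) (g p.1) p.2) (by fun_prop)
    (fun p ↦ suspendVec_ne_zero e.2 (g p.1).2 _) <| by
      rintro b s (rfl | rfl | hb)
      · simp
      · simp
      · simp [coe_loop_of_mem_boundary g hb]

@[simp]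
theorem coe_suspendLoop (g : Ω^ (Fin n) ({0}ᶜ : Set E) e) (y : Fin (n + 1) → I) :
    (suspendLoop g y : E × ℝ) = suspendVec (e : E) (g (Fin.tail y)) (y 0) := rfl

theorem suspendLoop_homotopic {f g : Ω^ (Fin n) ({0}ᶜ : Set E) e} (h : GenLoop.Homotopic f g) :
    GenLoop.Homotopic (suspendLoop f) (suspendLoop g) := by
  obtain ⟨H, hH, hne, h₀, h₁, hb⟩ := homotopic_subtype_iff_exists.1 h
  refine homotopic_subtype_iff_exists.2
    ⟨fun p ↦ suspendVec (e : E) (H (p.1, Fin.tail p.2)) (p.2 0), by fun_prop,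
      fun p ↦ suspendVec_ne_zero e.2 (hne _) _, fun y ↦ by simp [h₀], fun y ↦ by simp [h₁],
      fun t y hy ↦ ?_⟩
  rcases mem_boundary_succ_iff.1 hy with hy | hy | hy
  · simp [hy]
  · simp [hy]
  · simp [hb t _ hy]

theorem suspendLoop_transAt (i : Fin n) (f g : Ω^ (Fin n) ({0}ᶜ : Set E) e) :
    suspendLoop (GenLoop.transAt i f g) =
      GenLoop.transAt i.succ (suspendLoop f) (suspendLoop g) := by
  have htail : ∀ (y : Fin (n + 1) → I) (s : I),
      Fin.tail (Function.update y i.succ s) = Function.update (Fin.tail y) i s := fun y s ↦ by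
    funext j
    simp [Fin.tail, Function.update_apply]
  ext1 y
  refine Subtype.ext ?_
  by_cases h : (y i.succ : ℝ) ≤ 1 / 2
  · have h' : (Fin.tail y i : ℝ) ≤ 1 / 2 := h
    simp only [coe_suspendLoop, GenLoop.transAt, GenLoop.coe_copy, if_pos h, if_pos h', htail,
      Function.update_of_ne (Fin.succ_ne_zero i).symm]
    rfl
  · have h' : ¬ (Fin.tail y i : ℝ) ≤ 1 / 2 := h
    simp only [coe_suspendLoop, GenLoop.transAt, GenLoop.coe_copy, if_neg h, if_neg h', htail,
      Function.update_of_ne (Fin.succ_ne_zero i).symm]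
    rfl

/-- The suspension homomorphism. -/
noncomputable def suspendHom (n : ℕ) (e : ({0}ᶜ : Set E)) :
    HomotopyGroup (Fin (n + 1)) ({0}ᶜ : Set E) e →*
      HomotopyGroup (Fin (n + 1 + 1)) ({0}ᶜ : Set (E × ℝ)) (suspendBase e) :=
  homOfLoopMap suspendLoop (fun _ _ ↦ suspendLoop_homotopic) 0 (Fin.succ 0) (suspendLoop_transAt 0)

end Suspension

section Equator

variable {E : Type*} [NormedAddCommGroup E] {n : ℕ} {e : ({0}ᶜ : Set E)}

theorem IsSeparatedBy.mem_compl_zero {X : Type*} {f : X → E × ℝ} {r : X → ℝ}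
    (h : IsSeparatedBy f r) (x : X) : f x ∈ ({0}ᶜ : Set (E × ℝ)) := fun hx ↦ by
  rw [Set.mem_singleton_iff] at hx
  simpa [hx] using h x (by simp [hx])

theorem IsSeparatedBy.fst_mem_compl_zero {X : Type*} {f : X → E × ℝ} {r : X → ℝ}
    (h : IsSeparatedBy f r) {x : X} (hx : r x = 0) : (f x).1 ∈ ({0}ᶜ : Set E) := fun hfx ↦ by
  simpa [hx] using h x hfx

/-- A function on the cube which vanishes precisely on the boundary and on the equator
`y 0 = 1 / 2`, and has the sign of `y 0 - 1 / 2`. -/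
noncomputable def hemisphereWeight (y : Fin (n + 1) → I) : ℝ :=
  (y 0 - 1 / 2 : ℝ) * ∏ i, ((y i : ℝ) * (1 - y i))

@[fun_prop]
theorem continuous_hemisphereWeight : Continuous (hemisphereWeight (n := n)) := by
  unfold hemisphereWeight
  fun_prop

theorem hemisphereWeight_eq_zero_iff {y : Fin (n + 1) → I} :
    hemisphereWeight y = 0 ↔ (y 0 : ℝ) = 1 / 2 ∨ y ∈ Cube.boundary (Fin (n + 1)) := by
  simp [hemisphereWeight, Cube.boundary, Finset.prod_eq_zero_iff, sub_eq_zero,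
    eq_comm (a := (1 : ℝ))]

theorem mul_hemisphereWeight_nonneg (y : Fin (n + 1) → I) :
    0 ≤ (y 0 - 1 / 2 : ℝ) * hemisphereWeight y := by
  rw [hemisphereWeight, ← mul_assoc]
  exact mul_nonneg (mul_self_nonneg _)
    (Finset.prod_nonneg fun i _ ↦ mul_nonneg (y i).2.1 (sub_nonneg.2 (y i).2.2))

theorem IsSeparatedBy.add_hemisphereWeight {f : (Fin (n + 1) → I) → E × ℝ}
    (hf : IsSeparatedBy f fun y ↦ y 0 - 1 / 2) {Λ : ℝ} (hΛ : 0 ≤ Λ) :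
    IsSeparatedBy (fun y ↦ f y + (0, Λ * hemisphereWeight y)) fun y ↦ y 0 - 1 / 2 := by
  intro y hy
  simp only [Prod.fst_add, add_zero, Prod.snd_add, mul_add] at hy ⊢
  rw [mul_left_comm]
  exact add_pos_of_pos_of_nonneg (hf y hy) (mul_nonneg hΛ (mul_hemisphereWeight_nonneg y))

theorem exists_homotopic_add_hemisphereWeight
    {f : Ω^ (Fin (n + 1)) ({0}ᶜ : Set (E × ℝ)) (suspendBase e)}
    (hf : IsSeparatedBy (fun y ↦ (f y : E × ℝ)) fun y ↦ y 0 - 1 / 2) {Λ : ℝ} (hΛ : 0 ≤ Λ) :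
    ∃ f' : Ω^ (Fin (n + 1)) ({0}ᶜ : Set (E × ℝ)) (suspendBase e), GenLoop.Homotopic f f' ∧
      ∀ y, (f' y : E × ℝ) = (f y : E × ℝ) + (0, Λ * hemisphereWeight y) := by
  have hb : ∀ t : ℝ, ∀ y ∈ Cube.boundary (Fin (n + 1)),
      (f y : E × ℝ) + (0, t * Λ * hemisphereWeight y) = (suspendBase e : E × ℝ) := fun t y hy ↦ by
    simp [coe_loop_of_mem_boundary f hy, hemisphereWeight_eq_zero_iff.2 (.inr hy)]
  refine ⟨loopOfMapsTo (fun y ↦ (f y : E × ℝ) + (0, Λ * hemisphereWeight y)) (by fun_prop)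
    (hf.add_hemisphereWeight hΛ).mem_compl_zero (by simpa using hb 1), ?_, fun _ ↦ rfl⟩
  exact homotopic_subtype_iff_exists.2
    ⟨fun q ↦ (f q.2 : E × ℝ) + (0, q.1 * Λ * hemisphereWeight q.2), by fun_prop,
      fun q ↦ (hf.add_hemisphereWeight (mul_nonneg q.1.2.1 hΛ)).mem_compl_zero q.2,
      fun y ↦ by simp, fun y ↦ by simp, fun t ↦ hb t⟩

theorem exists_nonneg_forall_add_mul_ne_zero {K : Type*} [TopologicalSpace K] {S : Set K}
    (hS : IsCompact S) {h χ : K → ℝ} (hh : Continuous h) (hχ : Continuous χ)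
    (hne : ∀ q ∈ S, χ q ≠ 0) : ∃ Λ, 0 ≤ Λ ∧ ∀ q ∈ S, h q + Λ * χ q ≠ 0 := by
  obtain ⟨C, hC⟩ := hS.exists_bound_of_continuousOn (hh.continuousOn.div hχ.continuousOn hne)
  refine ⟨|C| + 1, by positivity, fun q hq h₀ ↦ ?_⟩
  have hquot : h q / χ q = -(|C| + 1) := by
    rw [div_eq_iff (hne q hq)]
    linarith
  have hCq : ‖h q / χ q‖ ≤ C := hC q hq
  rw [hquot, norm_neg, Real.norm_of_nonneg (by positivity)] at hCq
  linarith [le_abs_self C]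

variable [NormedSpace ℝ E]

/- Where the straight line homotopy from `f` to `g` meets the axis `{0} × ℝ`, the weight does not
vanish, so that a large multiple of it pushes the homotopy away from the origin. -/
theorem exists_forall_lineMap_add_hemisphereWeight_ne_zero
    {f g : Ω^ (Fin (n + 1)) ({0}ᶜ : Set (E × ℝ)) (suspendBase e)}
    (hf : IsSeparatedBy (fun y ↦ (f y : E × ℝ)) fun y ↦ y 0 - 1 / 2)
    (heq : ∀ y, (y 0 : ℝ) = 1 / 2 → (f y : E × ℝ).1 = (g y : E × ℝ).1) :
    ∃ Λ, 0 ≤ Λ ∧ ∀ (t : I) y, AffineMap.lineMap (f y : E × ℝ) (g y : E × ℝ) (t : ℝ) +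
      ((0, Λ * hemisphereWeight y) : E × ℝ) ≠ 0 := by
  let L : I × (Fin (n + 1) → I) → E × ℝ := fun q ↦
    AffineMap.lineMap (f q.2 : E × ℝ) (g q.2 : E × ℝ) (q.1 : ℝ)
  have hL : Continuous L := by
    simp only [L, AffineMap.lineMap_apply_module]
    fun_prop
  have hL_eq : ∀ q, (f q.2 : E × ℝ).1 = (g q.2 : E × ℝ).1 → (L q).1 = (f q.2 : E × ℝ).1 :=
    fun q hq ↦ by simp [L, AffineMap.lineMap_apply_module, ← hq, ← add_smul]
  have hne : ∀ q ∈ {q | (L q).1 = 0}, hemisphereWeight q.2 ≠ 0 := by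
    intro q (hq : (L q).1 = 0) h₀
    rcases hemisphereWeight_eq_zero_iff.1 h₀ with hy | hy
    · exact hf.fst_mem_compl_zero (sub_eq_zero.2 hy) ((hL_eq q (heq _ hy)).symm.trans hq)
    · rw [hL_eq q (by simp [coe_loop_of_mem_boundary _ hy])] at hq
      exact e.2 (by simpa [coe_loop_of_mem_boundary _ hy] using hq)
  obtain ⟨Λ, hΛ, hΛne⟩ := exists_nonneg_forall_add_mul_ne_zero
    (isClosed_eq hL.fst continuous_const).isCompact hL.snd
    (continuous_hemisphereWeight.comp continuous_snd) hne
  refine ⟨Λ, hΛ, fun t y h₀ ↦ hΛne (t, y) ?_ (congrArg Prod.snd h₀)⟩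
  exact (add_zero _).symm.trans (congrArg Prod.fst h₀)

theorem homotopic_of_eq_on_equator
    {f g : Ω^ (Fin (n + 1)) ({0}ᶜ : Set (E × ℝ)) (suspendBase e)}
    (hf : IsSeparatedBy (fun y ↦ (f y : E × ℝ)) fun y ↦ y 0 - 1 / 2)
    (hg : IsSeparatedBy (fun y ↦ (g y : E × ℝ)) fun y ↦ y 0 - 1 / 2)
    (heq : ∀ y, (y 0 : ℝ) = 1 / 2 → (f y : E × ℝ).1 = (g y : E × ℝ).1) :
    GenLoop.Homotopic f g := by
  obtain ⟨Λ, hΛ, hne⟩ := exists_forall_lineMap_add_hemisphereWeight_ne_zero hf heq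
  obtain ⟨f', hff', hf'⟩ := exists_homotopic_add_hemisphereWeight hf hΛ
  obtain ⟨g', hgg', hg'⟩ := exists_homotopic_add_hemisphereWeight hg hΛ
  refine hff'.trans (.trans (homotopic_of_segment_subset fun y ↦ ?_) hgg'.symm)
  rw [segment_eq_image_lineMap]
  rintro _ ⟨t, ht, rfl⟩
  refine Set.mem_compl_singleton_iff.2 ?_
  convert hne ⟨t, ht⟩ y using 1
  rw [hf', hg', AffineMap.lineMap_apply_module, AffineMap.lineMap_apply_module]
  module

end Equator

section Relevel

open Set.Icc (convexComb)

/-- The piecewise linear reparametrization of `I` which fixes the end points and takes the value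
`l` at `1 / 2`. -/
noncomputable def relevel (l s : I) : I :=
  convexComb (convexComb 0 l (Set.projIcc 0 1 zero_le_one (2 * s : ℝ))) 1
    (Set.projIcc 0 1 zero_le_one (2 * s - 1 : ℝ))

@[fun_prop]
theorem continuous_relevel {Z : Type*} [TopologicalSpace Z] {l s : Z → I} (hl : Continuous l)
    (hs : Continuous s) : Continuous fun z ↦ relevel (l z) (s z) := by
  unfold relevel
  fun_prop

theorem relevel_of_le_half {l s : I} (hs : (s : ℝ) ≤ 1 / 2) :
    relevel l s = convexComb 0 l (Set.projIcc 0 1 zero_le_one (2 * s : ℝ)) := by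
  rw [relevel, Set.projIcc_of_le_left _ (by linarith : 2 * (s : ℝ) - 1 ≤ 0)]
  exact Set.Icc.convexComb_zero _ _

theorem relevel_of_half_le {l s : I} (hs : 1 / 2 ≤ (s : ℝ)) :
    relevel l s = convexComb l 1 (Set.projIcc 0 1 zero_le_one (2 * s - 1 : ℝ)) := by
  rw [relevel, Set.projIcc_of_right_le _ (by linarith : 1 ≤ 2 * (s : ℝ))]
  exact congrArg (convexComb · _ _) (Set.Icc.convexComb_one _ _)

@[simp]
theorem relevel_zero (l : I) : relevel l 0 = 0 := by
  simp [relevel_of_le_half]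

@[simp]
theorem relevel_one (l : I) : relevel l 1 = 1 := by
  rw [relevel_of_half_le (by norm_num), Set.projIcc_of_right_le _ (by norm_num)]
  exact Set.Icc.convexComb_one _ _

theorem relevel_le {l s : I} (hs : (s : ℝ) ≤ 1 / 2) : relevel l s ≤ l := by
  rw [relevel_of_le_half hs]
  exact Set.Icc.convexComb_le unitInterval.nonneg' _

theorem le_relevel {l s : I} (hs : 1 / 2 ≤ (s : ℝ)) : l ≤ relevel l s := by
  rw [relevel_of_half_le hs]
  exact Set.Icc.le_convexComb unitInterval.le_one' _

theorem relevel_of_eq_half {l s : I} (hs : (s : ℝ) = 1 / 2) : relevel l s = l :=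
  le_antisymm (relevel_le hs.le) (le_relevel hs.ge)

variable {B E : Type*} [NormedAddCommGroup E] {f : B × I → E × ℝ} {l l' : B → I}

theorem IsSeparatedBy.comp_relevel (h : IsSeparatedBy f fun p ↦ p.2 - l p.1) :
    IsSeparatedBy (fun p : B × I ↦ f (p.1, relevel (l p.1) p.2)) fun p ↦ p.2 - 1 / 2 := by
  intro p hp
  have hpos : 0 < (relevel (l p.1) p.2 - l p.1 : ℝ) * _ := h _ hp
  rcases pos_and_pos_or_neg_and_neg_of_mul_pos hpos with ⟨hr, hf⟩ | ⟨hr, hf⟩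
  · exact mul_pos (sub_pos.2 <| lt_of_not_ge fun hs ↦ (sub_pos.1 hr).not_ge (relevel_le hs)) hf
  · exact mul_pos_of_neg_of_neg
      (sub_neg.2 <| lt_of_not_ge fun hs ↦ (sub_neg.1 hr).not_ge (le_relevel hs)) hf

theorem IsSeparatedBy.convexComb (h : IsSeparatedBy f fun p ↦ p.2 - l p.1)
    (h' : IsSeparatedBy f fun p ↦ p.2 - l' p.1) (t : I) :
    IsSeparatedBy f fun p ↦ p.2 - convexComb (l p.1) (l' p.1) t := by
  intro p hp
  have hcomb : (p.2 - Set.Icc.convexComb (l p.1) (l' p.1) t : ℝ) * (f p).2 =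
      (1 - t) * ((p.2 - l p.1) * (f p).2) + t * ((p.2 - l' p.1) * (f p).2) := by
    rw [Set.Icc.coe_convexComb]
    ring
  rw [hcomb]
  exact (convex_Ioi (0 : ℝ)) (h p hp) (h' p hp) (sub_nonneg.2 t.2.2) t.2.1 (by ring)

end Relevel

section Slice

variable {E : Type*} [NormedAddCommGroup E] {n : ℕ} {e : ({0}ᶜ : Set E)}
  {f : (Fin n → I) × I → E × ℝ} {l l' : (Fin n → I) → I}

/-- The first component of `f` along a separating graph `s = l b`, as a loop in `E ∖ 0`. -/
def sliceLoop (hf : Continuous f) (hx : IsBasedAt f ((e : E), 0)) (hl : Continuous l)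
    (hsep : IsSeparatedBy f fun p ↦ p.2 - l p.1) : Ω^ (Fin n) ({0}ᶜ : Set E) e :=
  loopOfMapsTo (fun b ↦ (f (b, l b)).1) (by fun_prop) (fun _ ↦ hsep.fst_mem_compl_zero (sub_self _))
    fun b hb ↦ congrArg Prod.fst (hx b (l b) (.inr (.inr hb)))

theorem sliceLoop_homotopic (hf : Continuous f) (hx : IsBasedAt f ((e : E), 0))
    (hl : Continuous l) (hl' : Continuous l') (hsep : IsSeparatedBy f fun p ↦ p.2 - l p.1)
    (hsep' : IsSeparatedBy f fun p ↦ p.2 - l' p.1) :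
    GenLoop.Homotopic (sliceLoop hf hx hl hsep) (sliceLoop hf hx hl' hsep') :=
  homotopic_subtype_iff_exists.2
    ⟨fun q ↦ (f (q.2, Set.Icc.convexComb (l q.2) (l' q.2) q.1)).1, by fun_prop,
      fun q ↦ (hsep.convexComb hsep' q.1).fst_mem_compl_zero (sub_self _),
      fun b ↦ by simp [sliceLoop], fun b ↦ by simp [sliceLoop],
      fun _ b hb ↦ congrArg Prod.fst (hx b _ (.inr (.inr hb)))⟩

variable [NormedSpace ℝ E]

theorem isSeparatedBy_suspendLoop (g : Ω^ (Fin n) ({0}ᶜ : Set E) e) :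
    IsSeparatedBy (fun y ↦ (suspendLoop g y : E × ℝ)) fun y ↦ y 0 - 1 / 2 := fun y hy ↦
  mul_suspendVec_snd_pos (y 0).2 fun h ↦
    suspendVec_ne_zero e.2 (g (Fin.tail y)).2 (y 0) (Prod.ext hy h)

theorem stackLoop_homotopic_suspendLoop (hf : Continuous f) (hx : IsBasedAt f ((e : E), 0))
    (hl : Continuous l) (hsep : IsSeparatedBy f fun p ↦ p.2 - l p.1) :
    GenLoop.Homotopic (stackLoop (x := suspendBase e) f hf hsep.mem_compl_zero hx)
      (suspendLoop (sliceLoop hf hx hl hsep)) := by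
  obtain ⟨hx', hρ⟩ := homotopic_stackLoop_comp (x := suspendBase e) hf hsep.mem_compl_zero hx
    (ρ := fun p ↦ relevel (l p.1) p.2) (by fun_prop) (by simp) (by simp)
  refine hρ.trans (homotopic_of_eq_on_equator
    (fun y hy ↦ IsSeparatedBy.comp_relevel hsep (_, y 0) hy)
    (isSeparatedBy_suspendLoop _) fun y hy ↦ ?_)
  rw [coe_suspendLoop, hy, suspendVec_half]
  simp [sliceLoop, relevel_of_eq_half hy]

theorem segment_subset_compl_zero {x y : E × ℝ} (hx : x ≠ 0) (hsnd : y.2 = x.2)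
    (heq : x.2 = 0 → y = x) : segment ℝ x y ⊆ {0}ᶜ := by
  by_cases h : x.2 = 0
  · rw [heq h, segment_same]
    exact Set.singleton_subset_iff.2 hx
  · rintro z hz rfl
    obtain ⟨a, b, -, -, hab, hz⟩ := hz
    exact h (by simpa [hsnd, ← add_mul, hab] using congrArg Prod.snd hz)

end Slice

section Freudenthal

variable {E : Type*} [NormedAddCommGroup E] [NormedSpace ℝ E] [FiniteDimensional ℝ E] {n : ℕ}
  {e : ({0}ᶜ : Set E)}

theorem exists_suspendLoop_homotopic (hE : n + 2 < 2 * Module.finrank ℝ E)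
    (f : Ω^ (Fin (n + 1)) ({0}ᶜ : Set (E × ℝ)) (suspendBase e)) :
    ∃ g : Ω^ (Fin n) ({0}ᶜ : Set E) e, GenLoop.Homotopic (suspendLoop g) f := by
  have hbase : IsBasedAt (fun p : (Fin n → I) × I ↦ (f (Fin.cons p.2 p.1) : E × ℝ))
      ((e : E), 0) := isBasedAt_loop_cons f
  obtain ⟨f', l, hf', hsep, hsnd, heq⟩ := exists_isSeparatedBy (isClosedEmbedding_cube (Fin n))
    (by simpa using hE) (f := fun p ↦ (f (Fin.cons p.2 p.1) : E × ℝ)) (by fun_prop)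
    (fun p ↦ (f _).2) (fun b ↦ congrArg Prod.snd (hbase b 0 (.inl rfl)))
    fun b ↦ congrArg Prod.snd (hbase b 1 (.inr (.inl rfl)))
  have hx : IsBasedAt f' ((e : E), 0) := fun b s h ↦
    (heq _ (congrArg Prod.snd (hbase b s h))).trans (hbase b s h)
  refine ⟨sliceLoop hf' hx l.continuous hsep,
    (stackLoop_homotopic_suspendLoop hf' hx l.continuous hsep).symm.trans
      (homotopic_of_segment_subset fun y ↦ ?_).symm⟩
  have hy := segment_subset_compl_zero (f _).2 (hsnd (Fin.tail y, y 0)) (heq (Fin.tail y, y 0))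
  rwa [Fin.cons_self_tail] at hy

/- A null homotopy of the suspension of `g` is a family, over `u : I`, of maps on a cube. Separating
the whole family yields a null homotopy of a slice at `u = 0`, which is homotopic to the slice at
the level `1 / 2`, that is, to `g`. -/
theorem homotopic_const_of_suspendLoop (hE : n + 3 < 2 * Module.finrank ℝ E)
    {g : Ω^ (Fin n) ({0}ᶜ : Set E) e} (hg : GenLoop.Homotopic (suspendLoop g) GenLoop.const) :
    GenLoop.Homotopic g GenLoop.const := by
  obtain ⟨H, hH, hne, h₀, h₁, hb⟩ := homotopic_subtype_iff_exists.1 hg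
  have hbase : ∀ u, IsBasedAt (fun p : (Fin n → I) × I ↦ H (u, Fin.cons p.2 p.1))
      ((e : E), 0) := fun u b s h ↦ hb u _ (mem_boundary_succ_iff.2 (by simpa using h))
  obtain ⟨f', l, hf', hsep, hsnd, heq⟩ := exists_isSeparatedBy
    (isClosedEmbedding_interval.prodMap (isClosedEmbedding_cube (Fin n)))
    (by simp; omega) (f := fun p ↦ H (p.1.1, Fin.cons p.2 p.1.2)) (by fun_prop)
    (fun p ↦ hne _) (fun b ↦ congrArg Prod.snd (hbase b.1 b.2 0 (.inl rfl)))
    fun b ↦ congrArg Prod.snd (hbase b.1 b.2 1 (.inr (.inl rfl)))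
  have hx : ∀ u, IsBasedAt (fun p : (Fin n → I) × I ↦ f' ((u, p.1), p.2)) ((e : E), 0) :=
    fun u b s h ↦ (heq _ (congrArg Prod.snd (hbase u b s h))).trans (hbase u b s h)
  have hsusp : ∀ b s, H (0, Fin.cons s b) = suspendVec (e : E) (g b) s := fun b s ↦ by
    simp [h₀]
  obtain ⟨c, hc⟩ : ∃ c : I, (c : ℝ) = 1 / 2 := ⟨⟨1 / 2, by norm_num, by norm_num⟩, rfl⟩
  have hsep_half : IsSeparatedBy (fun p : (Fin n → I) × I ↦ f' ((0, p.1), p.2))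
      fun p ↦ p.2 - c := fun p hp ↦ by
    have hp₂ : (f' ((0, p.1), p.2)).2 = (suspendVec (e : E) (g p.1) p.2).2 := by
      rw [hsnd, hsusp]
    rw [hp₂, hc]
    exact mul_suspendVec_snd_pos p.2.2 (hp₂ ▸ fun h ↦ hsep.mem_compl_zero _ (Prod.ext hp h))
  have hhalf : sliceLoop (l := fun _ ↦ c) (by fun_prop) (hx 0) continuous_const hsep_half = g := by
    have hHc : ∀ b, H (0, Fin.cons c b) = ((g b : E), 0) := fun b ↦ by
      rw [hsusp, hc, suspendVec_half]
    ext1 b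
    exact Subtype.ext (congrArg Prod.fst
      ((heq ((0, b), c) (congrArg Prod.snd (hHc b))).trans (hHc b)))
  have hslice : GenLoop.Homotopic (sliceLoop (l := fun b ↦ l (0, b)) (by fun_prop) (hx 0)
      (by fun_prop) fun p hp ↦ hsep _ hp) GenLoop.const :=
    homotopic_subtype_iff_exists.2 ⟨fun q ↦ (f' (q, l q)).1, by fun_prop,
      fun q ↦ hsep.fst_mem_compl_zero (sub_self _), fun b ↦ rfl,
      fun b ↦ congrArg Prod.fst ((heq ((1, b), l (1, b)) (congrArg Prod.snd (h₁ _))).trans (h₁ _)),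
      fun u b hb ↦ congrArg Prod.fst (hx u b _ (.inr (.inr hb)))⟩
  exact hhalf ▸ (sliceLoop_homotopic _ _ _ _ _ _).trans hslice

theorem suspendHom_surjective (hE : n + 3 < 2 * Module.finrank ℝ E) :
    Function.Surjective (suspendHom n e) :=
  homOfLoopMap_surjective fun f ↦ exists_suspendLoop_homotopic (by omega) f

theorem suspendHom_injective (hE : n + 4 < 2 * Module.finrank ℝ E) :
    Function.Injective (suspendHom n e) :=
  homOfLoopMap_injective fun _ ↦ homotopic_const_of_suspendLoop (by omega)

end Freudenthal

section Hopf

theorem apply_ne_zero_of_norm_sub_lt_one {𝕜 V : Type*} [NontriviallyNormedField 𝕜]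
    [NormedAddCommGroup V] [NormedSpace 𝕜 V] {P Q : V →L[𝕜] V} (h : ‖P - Q‖ < 1) {v : V}
    (hv : v ≠ 0) (hPv : P v = v) : Q v ≠ 0 := by
  intro hQv
  refine lt_irrefl ‖v‖ ?_
  calc ‖v‖ = ‖(P - Q) v‖ := by rw [sub_apply, hPv, hQv, sub_zero]
    _ ≤ ‖P - Q‖ * ‖v‖ := (P - Q).le_opNorm v
    _ < 1 * ‖v‖ := mul_lt_mul_of_pos_right h (norm_pos_iff.2 hv)
    _ = ‖v‖ := one_mul _

/- A nowhere zero section at `t` is moved to a nearby `t'` by applying the projection at `t'`. -/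
theorem exists_section_of_idempotent {𝕜 V B T : Type*} [NontriviallyNormedField 𝕜]
    [NormedAddCommGroup V] [NormedSpace 𝕜 V] [TopologicalSpace B] [CompactSpace B]
    [TopologicalSpace T] [PreconnectedSpace T] {P : T × B → V →L[𝕜] V} (hP : Continuous P)
    (hidem : ∀ q v, P q (P q v) = P q v) {t₀ : T} {w : B → V} (hw : Continuous w)
    (hw₀ : ∀ b, w b ≠ 0) (hPw : ∀ b, P (t₀, b) (w b) = w b) (t₁ : T) :
    ∃ v : B → V, Continuous v ∧ (∀ b, v b ≠ 0) ∧ (∀ b, P (t₁, b) (v b) = v b) ∧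
      ∀ b, (∀ t t', P (t, b) = P (t', b)) → v b = w b := by
  let Φ : T → C(B, V →L[𝕜] V) := fun t ↦ ⟨fun b ↦ P (t, b), by fun_prop⟩
  have hΦ : Continuous Φ := ContinuousMap.continuous_of_continuous_uncurry _ hP
  let Transports : T → T → Prop := fun t t' ↦ ∀ w : B → V, Continuous w → (∀ b, w b ≠ 0) →
    (∀ b, P (t, b) (w b) = w b) → ∃ v : B → V, Continuous v ∧ (∀ b, v b ≠ 0) ∧
      (∀ b, P (t', b) (v b) = v b) ∧ ∀ b, (∀ t t', P (t, b) = P (t', b)) → v b = w b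
  have hnear : ∀ t t', dist (Φ t) (Φ t') < 1 → Transports t t' := by
    intro t t' hdist w hw hw₀ hPw
    refine ⟨fun b ↦ P (t', b) (w b), by fun_prop, fun b ↦ ?_, fun b ↦ hidem _ _,
      fun b hconst ↦ (DFunLike.congr_fun (hconst t' t) _).trans (hPw b)⟩
    refine apply_ne_zero_of_norm_sub_lt_one ?_ (hw₀ b) (hPw b)
    rw [← dist_eq_norm]
    exact (ContinuousMap.dist_apply_le_dist (f := Φ t) (g := Φ t') b).trans_lt hdist
  have htransports : Transports t₀ t₁ := by
    refine PreconnectedSpace.induction₂' _ (fun t ↦ ?_) ⟨fun t t' t'' h h' w hw hw₀ hPw ↦ ?_⟩ t₀ t₁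
    · filter_upwards [hΦ.continuousAt.eventually (Metric.ball_mem_nhds (Φ t) one_pos)] with t' ht'
      exact ⟨hnear t t' (dist_comm (Φ t) (Φ t') ▸ ht'), hnear t' t ht'⟩
    · obtain ⟨v, hv, hv₀, hPv, hvw⟩ := h w hw hw₀ hPw
      obtain ⟨u, hu, hu₀, hPu, huv⟩ := h' v hv hv₀ hPv
      exact ⟨u, hu, hu₀, hPu, fun b hb ↦ (huv b hb).trans (hvw b hb)⟩
  exact htransports w hw hw₀ hPw

/-- The traceless Hermitian matrix `[[x, z], [conj z, -x]]` attached to a point `(z, x)` of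
`ℂ × ℝ`, as an endomorphism of `ℂ × ℂ`. Its square is the scalar `‖z‖ ^ 2 + x ^ 2`. -/
noncomputable def pauli (q : ℂ × ℝ) : (ℂ × ℂ) →L[ℂ] ℂ × ℂ :=
  ((q.2 : ℂ) • ContinuousLinearMap.fst ℂ ℂ ℂ + q.1 • ContinuousLinearMap.snd ℂ ℂ ℂ).prod
    (conj q.1 • ContinuousLinearMap.fst ℂ ℂ ℂ - (q.2 : ℂ) • ContinuousLinearMap.snd ℂ ℂ ℂ)

theorem pauli_apply (q : ℂ × ℝ) (v : ℂ × ℂ) :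
    pauli q v = (q.2 * v.1 + q.1 * v.2, conj q.1 * v.1 - q.2 * v.2) := rfl

/-- The Euclidean norm of a point of `ℂ × ℝ`, which is the positive eigenvalue of `pauli`. -/
noncomputable def radius (q : ℂ × ℝ) : ℝ := √(‖q.1‖ ^ 2 + q.2 ^ 2)

@[fun_prop]
theorem continuous_radius : Continuous radius := by
  unfold radius
  fun_prop

theorem radius_nonneg (q : ℂ × ℝ) : 0 ≤ radius q := Real.sqrt_nonneg _

theorem radius_pos {q : ℂ × ℝ} (hq : q ≠ 0) : 0 < radius q := by
  refine Real.sqrt_pos.2 ((by positivity : 0 ≤ ‖q.1‖ ^ 2 + q.2 ^ 2).lt_of_ne' fun h ↦ hq ?_)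
  obtain ⟨h₁, h₂⟩ := (add_eq_zero_iff_of_nonneg (by positivity) (by positivity)).1 h
  exact Prod.ext (by simpa using h₁) (by simpa using h₂)

theorem pauli_pauli (q : ℂ × ℝ) (v : ℂ × ℂ) : pauli q (pauli q v) = (radius q : ℂ) ^ 2 • v := by
  have hradius : (radius q : ℂ) ^ 2 = q.1 * conj q.1 + q.2 ^ 2 := by
    rw [← Complex.ofReal_pow, radius, Real.sq_sqrt (by positivity), Complex.mul_conj,
      Complex.normSq_eq_norm_sq]
    push_cast
    rfl
  simp only [pauli_apply, hradius]
  ext <;> simp <;> ring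

/-- The projection of `ℂ × ℂ` onto the eigenline of `pauli q` for the eigenvalue `radius q`; the
eigenlines form the tautological line bundle over the sphere, whose circle bundle is the Hopf
fibration. -/
noncomputable def hopfProj (q : ℂ × ℝ) : (ℂ × ℂ) →L[ℂ] ℂ × ℂ :=
  (2⁻¹ : ℂ) • (ContinuousLinearMap.id ℂ (ℂ × ℂ) + (radius q : ℂ)⁻¹ • pauli q)

theorem hopfProj_apply (q : ℂ × ℝ) (v : ℂ × ℂ) :
    hopfProj q v = (2⁻¹ : ℂ) • (v + (radius q : ℂ)⁻¹ • pauli q v) := rfl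

theorem hopfProj_eq_self_iff {q : ℂ × ℝ} (hq : q ≠ 0) {v : ℂ × ℂ} :
    hopfProj q v = v ↔ pauli q v = (radius q : ℂ) • v := by
  have hr : (radius q : ℂ) ≠ 0 := by exact_mod_cast (radius_pos hq).ne'
  rw [hopfProj_apply, inv_smul_eq_iff₀ two_ne_zero, two_smul, add_right_inj, inv_smul_eq_iff₀ hr]

theorem hopfProj_hopfProj {q : ℂ × ℝ} (hq : q ≠ 0) (v : ℂ × ℂ) :
    hopfProj q (hopfProj q v) = hopfProj q v := by
  have hr : (radius q : ℂ) ≠ 0 := by exact_mod_cast (radius_pos hq).ne'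
  rw [hopfProj_eq_self_iff hq, hopfProj_apply, map_smul, map_add, map_smul, pauli_pauli,
    smul_comm (radius q : ℂ), smul_add (radius q : ℂ), smul_inv_smul₀ hr, smul_smul _ _ v, pow_two,
    inv_mul_cancel_left₀ hr, add_comm]

theorem continuous_hopfProj {Z : Type*} [TopologicalSpace Z] {f : Z → ℂ × ℝ} (hf : Continuous f)
    (hf₀ : ∀ z, f z ≠ 0) : Continuous fun z ↦ hopfProj (f z) := by
  refine continuous_clm_apply.2 fun v ↦ ?_
  have hinv : Continuous fun z ↦ (radius (f z) : ℂ)⁻¹ :=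
    (by fun_prop : Continuous fun z ↦ (radius (f z) : ℂ)).inv₀ fun z ↦ by
      exact_mod_cast (radius_pos (hf₀ z)).ne'
  simp only [hopfProj_apply, pauli_apply]
  fun_prop

theorem fst_ne_zero_of_pauli_eq {q : ℂ × ℝ} {v : ℂ × ℂ} (hv : v ≠ 0)
    (h : pauli q v = (radius q : ℂ) • v) (hq : q.1 = 0 → 0 < q.2) : v.1 ≠ 0 := by
  intro hv₁
  have hv₂ : v.2 ≠ 0 := fun hv₂ ↦ hv (Prod.ext hv₁ hv₂)
  have h₁ : q.1 = 0 := by simpa [pauli_apply, hv₁, hv₂] using congrArg Prod.fst h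
  have h₂ : -(q.2 : ℂ) = radius q :=
    mul_right_cancel₀ hv₂ (by simpa [pauli_apply, hv₁] using congrArg Prod.snd h)
  have h₃ : -q.2 = radius q := by exact_mod_cast h₂
  linarith [hq h₁, radius_nonneg q]

theorem snd_ne_zero_of_pauli_eq {q : ℂ × ℝ} {v : ℂ × ℂ} (hv : v ≠ 0)
    (h : pauli q v = (radius q : ℂ) • v) (hq : q.1 = 0 → q.2 < 0) : v.2 ≠ 0 := by
  intro hv₂
  have hv₁ : v.1 ≠ 0 := fun hv₁ ↦ hv (Prod.ext hv₁ hv₂)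
  have h₁ : q.1 = 0 := by simpa [pauli_apply, hv₁, hv₂] using congrArg Prod.snd h
  have h₂ : (q.2 : ℂ) = radius q :=
    mul_right_cancel₀ hv₁ (by simpa [pauli_apply, hv₂] using congrArg Prod.fst h)
  have h₃ : q.2 = radius q := by exact_mod_cast h₂
  linarith [hq h₁, radius_nonneg q]

variable {n : ℕ} {e : ({0}ᶜ : Set ℂ)}

theorem radius_zero_right (z : ℂ) : radius (z, 0) = ‖z‖ := by simp [radius]

theorem exists_hopfLift_of_suspendLoop {g : Ω^ (Fin n) ({0}ᶜ : Set ℂ) e}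
    (hg : GenLoop.Homotopic (suspendLoop g) GenLoop.const) :
    ∃ v : (Fin (n + 1) → I) → ℂ × ℂ, Continuous v ∧ (∀ y, v y ≠ 0) ∧
      (∀ y, pauli (suspendLoop g y) (v y) = (radius (suspendLoop g y) : ℂ) • v y) ∧
      ∀ y ∈ Cube.boundary (Fin (n + 1)), v y = ((e : ℂ), (‖(e : ℂ)‖ : ℂ)) := by
  obtain ⟨H, hH, hne, h₀, h₁, hb⟩ := homotopic_subtype_iff_exists.1 hg.symm
  have he : ((e : ℂ), (‖(e : ℂ)‖ : ℂ)) ≠ 0 := fun h ↦ e.2 (congrArg Prod.fst h)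
  have hbase : hopfProj ((e : ℂ), 0) ((e : ℂ), (‖(e : ℂ)‖ : ℂ)) = ((e : ℂ), (‖(e : ℂ)‖ : ℂ)) := by
    rw [hopfProj_eq_self_iff (q := ((e : ℂ), 0)) (suspendBase e).2, pauli_apply, radius_zero_right]
    ext <;> simp [mul_comm, Complex.mul_conj', pow_two]
  obtain ⟨v, hv, hv₀, hPv, hvb⟩ := exists_section_of_idempotent (continuous_hopfProj hH hne)
    (fun q ↦ hopfProj_hopfProj (hne q)) (t₀ := 0) continuous_const (fun _ ↦ he)
    (fun y ↦ by rw [h₀]; exact hbase) 1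
  refine ⟨v, hv, hv₀, fun y ↦ ?_, fun y hy ↦ hvb y fun t t' ↦ by rw [hb t y hy, hb t' y hy]⟩
  rw [← hopfProj_eq_self_iff (suspendLoop g y).2, ← h₁]
  exact hPv y

theorem exists_hopfCoordinates_of_suspendLoop {g : Ω^ (Fin n) ({0}ᶜ : Set ℂ) e}
    (hg : GenLoop.Homotopic (suspendLoop g) GenLoop.const) :
    ∃ v : (Fin (n + 1) → I) → ℂ × ℂ, Continuous v ∧
      (∀ y, 1 / 2 ≤ (y 0 : ℝ) → (v y).1 ≠ 0) ∧ (∀ y, (y 0 : ℝ) ≤ 1 / 2 → (v y).2 ≠ 0) ∧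
      (∀ y, (y 0 : ℝ) = 1 / 2 →
        (g (Fin.tail y) : ℂ) * (v y).2 = ‖(g (Fin.tail y) : ℂ)‖ * (v y).1) ∧
      ∀ y ∈ Cube.boundary (Fin (n + 1)), v y = ((e : ℂ), (‖(e : ℂ)‖ : ℂ)) := by
  obtain ⟨v, hv, hv₀, hpauli, hvb⟩ := exists_hopfLift_of_suspendLoop hg
  have hsep := isSeparatedBy_suspendLoop g
  refine ⟨v, hv, fun y hy ↦ ?_, fun y hy ↦ ?_, fun y hy ↦ ?_, hvb⟩
  · exact fst_ne_zero_of_pauli_eq (hv₀ y) (hpauli y) fun h ↦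
      pos_of_mul_pos_right (hsep y h) (sub_nonneg.2 hy)
  · exact snd_ne_zero_of_pauli_eq (hv₀ y) (hpauli y) fun h ↦
      neg_of_mul_pos_right (hsep y h) (sub_nonpos.2 hy)
  · simpa [hy, pauli_apply, radius_zero_right, -one_div] using congrArg Prod.fst (hpauli y)

/- On the upper half of the suspension the eigenline is spanned by a vector with first coordinate
nonzero, on the lower half by one with second coordinate nonzero, and on the equator `(z, 0)` these
coordinates have the ratio `z / ‖z‖`. Thus a nowhere zero section over the suspension of `g`
contracts `g`. -/
theorem homotopic_const_of_suspendLoop_complex {g : Ω^ (Fin n) ({0}ᶜ : Set ℂ) e}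
    (hg : GenLoop.Homotopic (suspendLoop g) GenLoop.const) : GenLoop.Homotopic g GenLoop.const := by
  obtain ⟨v, hv, hfst, hsnd, hequator, hvb⟩ := exists_hopfCoordinates_of_suspendLoop hg
  obtain ⟨c, hc⟩ : ∃ c : I, (c : ℝ) = 1 / 2 := ⟨⟨1 / 2, by norm_num, by norm_num⟩, rfl⟩
  let up : I → I := fun u ↦ Set.Icc.convexComb c 1 u
  let down : I → I := fun u ↦ Set.Icc.convexComb c 0 u
  have hup : ∀ u, 1 / 2 ≤ (up u : ℝ) := fun u ↦ hc ▸ Set.Icc.le_convexComb unitInterval.le_one' u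
  have hdown : ∀ u, (down u : ℝ) ≤ 1 / 2 := fun u ↦ by
    simp only [down, Set.Icc.coe_convexComb, hc, Set.Icc.coe_zero]
    linarith [u.2.1]
  have hnorm : (‖(e : ℂ)‖ : ℂ) ≠ 0 := by exact_mod_cast norm_ne_zero_iff.2 e.2
  have hratio : ∀ y y', y ∈ Cube.boundary (Fin (n + 1)) → y' ∈ Cube.boundary (Fin (n + 1)) →
      (‖(e : ℂ)‖ : ℂ) * ((v y).1 / (v y').2) = e := fun y y' hy hy' ↦ by
    rw [hvb y hy, hvb y' hy', mul_div_cancel₀ _ hnorm]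
  refine homotopic_subtype_iff_exists.2 ⟨fun p ↦
    ((1 - p.1) * ‖(g p.2 : ℂ)‖ + p.1 * ‖(e : ℂ)‖ : ℝ) *
      ((v (Fin.cons (up p.1) p.2)).1 / (v (Fin.cons (down p.1) p.2)).2),
    .mul (by fun_prop) (.div (by fun_prop) (by fun_prop) fun p ↦ hsnd _ (hdown p.1)), fun p ↦ ?_,
    fun b ↦ ?_, fun b ↦ ?_, fun u b hb ↦ ?_⟩
  · have hpos : 0 < (1 - p.1) * ‖(g p.2 : ℂ)‖ + p.1 * ‖(e : ℂ)‖ :=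
      (convex_Ioi (0 : ℝ)) (norm_pos_iff.2 (g p.2).2) (norm_pos_iff.2 e.2)
        (sub_nonneg.2 p.1.2.2) p.1.2.1 (sub_add_cancel _ _)
    exact mul_ne_zero (by exact_mod_cast hpos.ne')
      (div_ne_zero (hfst _ (hup p.1)) (hsnd _ (hdown p.1)))
  · have hv₂ := hsnd (Fin.cons c b) hc.le
    simpa [up, down, ← mul_div_assoc, div_eq_iff hv₂] using (hequator (Fin.cons c b) hc).symm
  · simpa using hratio _ _ (mem_boundary_succ_iff.2 (.inr (.inl (by simp [up]))))
      (mem_boundary_succ_iff.2 (.inl (by simp [down])))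
  · have hcons : ∀ s : I, (Fin.cons s b : Fin (n + 1) → I) ∈ Cube.boundary (Fin (n + 1)) :=
      fun s ↦ mem_boundary_succ_iff.2 (.inr (.inr (by simpa using hb)))
    simpa [coe_loop_of_mem_boundary g hb, ← add_mul] using hratio _ _ (hcons _) (hcons _)

theorem suspendHom_injective_complex : Function.Injective (suspendHom n e) :=
  homOfLoopMap_injective fun _ ↦ homotopic_const_of_suspendLoop_complex

end Hopf

section Spheres

theorem nonempty_homotopyGroup_compl_zero_mulEquiv {E F : Type*} [NormedAddCommGroup E]
    [NormedSpace ℝ E] [FiniteDimensional ℝ E] [NormedAddCommGroup F] [NormedSpace ℝ F]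
    [FiniteDimensional ℝ F] (N : Type*) [DecidableEq N] [Nonempty N]
    (h : Module.finrank ℝ E = Module.finrank ℝ F) (e : ({0}ᶜ : Set E)) (f : ({0}ᶜ : Set F)) :
    Nonempty (HomotopyGroup N ({0}ᶜ : Set E) e ≃* HomotopyGroup N ({0}ᶜ : Set F) f) := by
  let L : E ≃L[ℝ] F := .ofFinrankEq h
  obtain ⟨M, hM⟩ := SeparatingDual.exists_continuousLinearEquiv_apply_eq (R := ℝ)
    (L.map_eq_zero_iff.not.2 e.2) f.2
  exact ⟨homotopyGroupCongr ((L.trans M).toHomeomorph.subtype fun x ↦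
    (L.trans M).map_eq_zero_iff.not.symm) (Subtype.ext hM)⟩

/- The cases of dimension `2` and `3` are those of `ℂ` and `ℂ × ℝ`; from then on the suspension
homomorphism is in the stable range. -/
theorem nonempty_pi_compl_zero_pi_mulEquiv_int (n : ℕ) (e : ({0}ᶜ : Set (Fin (n + 2) → ℝ))) :
    Nonempty (HomotopyGroup (Fin (n + 1)) ({0}ᶜ : Set (Fin (n + 2) → ℝ)) e ≃*
      Multiplicative ℤ) := by
  have hone : (1 : ℂ) ∈ ({0}ᶜ : Set ℂ) := one_ne_zero
  obtain ⟨hcircle⟩ := nonempty_pi_one_puncturedPlane_mulEquiv ⟨1, hone⟩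
  induction n with
  | zero =>
    obtain ⟨ψ⟩ := nonempty_homotopyGroup_compl_zero_mulEquiv (Fin 1) (by simp) e ⟨(1 : ℂ), hone⟩
    exact ⟨ψ.trans hcircle⟩
  | succ n ih =>
    rcases n with _ | n
    · obtain ⟨ψ⟩ := nonempty_homotopyGroup_compl_zero_mulEquiv (Fin 2) (by simp) e
        (suspendBase ⟨(1 : ℂ), hone⟩)
      let suspension := MulEquiv.ofBijective (suspendHom 0 ⟨(1 : ℂ), hone⟩)
        ⟨suspendHom_injective_complex, suspendHom_surjective (by simp)⟩
      exact ⟨ψ.trans (suspension.symm.trans hcircle)⟩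
    · have e' : ({0}ᶜ : Set (Fin (n + 3) → ℝ)) := ⟨1, one_ne_zero⟩
      obtain ⟨ψ⟩ := nonempty_homotopyGroup_compl_zero_mulEquiv (Fin (n + 3)) (by simp) e
        (suspendBase e')
      obtain ⟨χ⟩ := ih e'
      let suspension := MulEquiv.ofBijective (suspendHom (n + 1) e')
        ⟨suspendHom_injective (by simp; omega), suspendHom_surjective (by simp; omega)⟩
      exact ⟨ψ.trans (suspension.symm.trans χ)⟩

theorem nonempty_pi_compl_zero_mulEquiv_int {E : Type*} [NormedAddCommGroup E] [NormedSpace ℝ E]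
    {n : ℕ} (hE : Module.finrank ℝ E = n + 2) (e : ({0}ᶜ : Set E)) :
    Nonempty (HomotopyGroup (Fin (n + 1)) ({0}ᶜ : Set E) e ≃* Multiplicative ℤ) := by
  have : FiniteDimensional ℝ E := Module.finite_of_finrank_pos (by omega)
  have e' : ({0}ᶜ : Set (Fin (n + 2) → ℝ)) := ⟨1, one_ne_zero⟩
  obtain ⟨ψ⟩ := nonempty_homotopyGroup_compl_zero_mulEquiv (Fin (n + 1)) (by simp [hE]) e e'
  obtain ⟨χ⟩ := nonempty_pi_compl_zero_pi_mulEquiv_int n e'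
  exact ⟨ψ.trans χ⟩

end Spheres

section C1Dimension

variable {E E' F : Type*} [NormedAddCommGroup E] [NormedSpace ℝ E] [NormedAddCommGroup E']
  [NormedSpace ℝ E'] [NormedAddCommGroup F] [NormedSpace ℝ F]

theorem exists_surjective_continuousLinearMap [FiniteDimensional ℝ F] {d : ℕ}
    (h : Module.finrank ℝ F ≤ d) : ∃ L : (Fin d → ℝ) →L[ℝ] F, Function.Surjective L := by
  let e : (Fin (Module.finrank ℝ F) → ℝ) ≃L[ℝ] F := .ofFinrankEq (by simp)
  let restrict := LinearMap.funLeft ℝ ℝ (Fin.castLE h)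
  have hrestrict : Function.Surjective restrict :=
    LinearMap.funLeft_surjective_of_injective ℝ ℝ _ (Fin.castLE_injective h)
  exact ⟨(e : (Fin (Module.finrank ℝ F) → ℝ) →L[ℝ] F).comp restrict.toContinuousLinearMap,
    e.surjective.comp hrestrict⟩

theorem C1DimLE.mono {D D' : Set E} {d : ℕ} (h : C1DimLE D d) (hD : D' ⊆ D) : C1DimLE D' d :=
  let ⟨p, hp, hDp⟩ := h
  ⟨p, hp, hD.trans hDp⟩

theorem C1DimLE.of_param [FiniteDimensional ℝ F] {ι : Type*} [Countable ι] {D : Set E} {d : ℕ}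
    (h : Module.finrank ℝ F ≤ d) {p : ι → F → E} (hp : ∀ i, ContDiff ℝ 1 (p i))
    (hD : ∀ x ∈ D, ∃ i v, p i v = x) : C1DimLE D d := by
  obtain ⟨L, hL⟩ := exists_surjective_continuousLinearMap h
  rcases isEmpty_or_nonempty ι with hι | hι
  · exact ⟨fun _ _ ↦ 0, fun _ ↦ contDiff_const, fun x hx ↦ hι.elim (hD x hx).choose⟩
  · obtain ⟨u, hu⟩ := exists_surjective_nat ι
    refine ⟨fun n v ↦ p (u n) (L v), fun n ↦ (hp _).comp L.contDiff, fun x hx ↦ ?_⟩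
    obtain ⟨i, v, rfl⟩ := hD x hx
    obtain ⟨n, rfl⟩ := hu i
    obtain ⟨w, rfl⟩ := hL v
    exact Set.mem_iUnion.2 ⟨n, w, rfl⟩

theorem c1DimLE_singleton (x : E) : C1DimLE {x} 0 :=
  ⟨fun _ _ ↦ x, fun _ ↦ contDiff_const, fun _ hy ↦ Set.mem_iUnion.2 ⟨0, 0, hy.symm⟩⟩

theorem C1DimLE.prod {D : Set E} {D' : Set E'} {d d' : ℕ} (h : C1DimLE D d) (h' : C1DimLE D' d') :
    C1DimLE (D ×ˢ D') (d + d') := by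
  obtain ⟨p, hp, hD⟩ := h
  obtain ⟨p', hp', hD'⟩ := h'
  refine .of_param (ι := ℕ × ℕ) (F := (Fin d → ℝ) × (Fin d' → ℝ))
    (p := fun n v ↦ (p n.1 v.1, p' n.2 v.2)) (by simp)
    (fun n ↦ ((hp _).comp contDiff_fst).prodMk ((hp' _).comp contDiff_snd)) ?_
  rintro ⟨x, x'⟩ ⟨hx, hx'⟩
  obtain ⟨n, v, rfl⟩ := Set.mem_iUnion.1 (hD hx)
  obtain ⟨n', v', rfl⟩ := Set.mem_iUnion.1 (hD' hx')
  exact ⟨(n, n'), (v, v'), rfl⟩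

theorem C1DimLE.pi {ι : Type*} [Fintype ι] {V : ι → Type*} [∀ i, NormedAddCommGroup (V i)]
    [∀ i, NormedSpace ℝ (V i)] {D : ∀ i, Set (V i)} {d : ι → ℕ} (h : ∀ i, C1DimLE (D i) (d i)) :
    C1DimLE (Set.univ.pi D) (∑ i, d i) := by
  choose p hp hD using h
  refine .of_param (ι := ι → ℕ) (F := ∀ i, Fin (d i) → ℝ)
    (p := fun n v i ↦ p i (n i) (v i)) (by simp [Module.finrank_pi_fintype])
    (fun n ↦ contDiff_pi.2 fun i ↦ (hp i _).comp
      (ContinuousLinearMap.proj (R := ℝ) (φ := fun i ↦ Fin (d i) → ℝ) i).contDiff) fun x hx ↦ ?_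
  choose n v hv using fun i ↦ Set.mem_iUnion.1 (hD i (hx i trivial))
  exact ⟨n, v, funext hv⟩

/- A dependent family is determined by the position of a vector lying in the span of the others,
these others, and the coefficients. -/
theorem c1DimLE_not_linearIndependent (E : Type*) [NormedAddCommGroup E] [NormedSpace ℂ E]
    [FiniteDimensional ℂ E] (n : ℕ) :
    C1DimLE {A : Fin (n + 1) → E | ¬ LinearIndependent ℂ A} (n * Module.finrank ℝ E + 2 * n) := by
  refine .of_param (ι := Fin (n + 1)) (F := (Fin n → E) × (Fin n → ℂ))
    (p := fun i v ↦ Fin.insertNth (α := fun _ ↦ E) i (∑ l, v.2 l • v.1 l) v.1) ?_ (fun i ↦ ?_) ?_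
  · simp [Module.finrank_pi_fintype, Complex.finrank_real_complex, mul_comm]
  · refine contDiff_pi.2 fun j ↦ ?_
    rcases Fin.eq_self_or_eq_succAbove i j with rfl | ⟨l, rfl⟩
    · simp only [Fin.insertNth_apply_same]
      exact ContDiff.sum fun l _ ↦ ((contDiff_apply ℝ ℂ l).comp contDiff_snd).smul
        ((contDiff_apply ℝ E l).comp contDiff_fst)
    · simp only [Fin.insertNth_apply_succAbove]
      exact (contDiff_apply ℝ E l).comp contDiff_fst
  · intro A hA
    obtain ⟨i, hi⟩ : ∃ i, A i ∈ Submodule.span ℂ (A '' (Set.univ \ {i})) := by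
      simpa [linearIndependent_iff_notMem_span] using hA
    rw [← Set.compl_eq_univ_sdiff, ← Fin.range_succAbove, ← Set.range_comp,
      Submodule.mem_span_range_iff_exists_fun] at hi
    obtain ⟨c, hc⟩ := hi
    exact ⟨i, (A ∘ i.succAbove, c), Fin.insertNth_eq_iff.2 ⟨hc, rfl⟩⟩

end C1Dimension

section Straightening

variable {E : Type*} [NormedAddCommGroup E]

/-- The vectors of `ℂ × E` that are not nonpositive real multiples of `(1, 0)`. -/
def slitDomain (E : Type*) [Zero E] : Set (ℂ × E) := {c | c.1 ∈ Complex.slitPlane ∨ c.2 ≠ 0}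

theorem isOpen_slitDomain : IsOpen (slitDomain E) :=
  (Complex.isOpen_slitPlane.preimage continuous_fst).union
    (isOpen_ne_fun continuous_snd continuous_const)

theorem starConvex_slitDomain [NormedSpace ℝ E] : StarConvex ℝ (1, 0) (slitDomain E) := by
  rintro c (hc | hc) a b ha hb hab
  · exact .inl (by simpa using Complex.starConvex_one_slitPlane hc ha hb hab)
  · rcases hb.eq_or_lt with rfl | hb
    · exact .inl (by simp_all)
    · exact .inr (by simp [hc, hb.ne'])

theorem exists_ofReal_of_notMem_slitDomain {c : ℂ × E}
    (hc : c ∉ slitDomain E) : ∃ t : ℝ, c = ((t : ℂ), 0) := by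
  obtain ⟨h₁, h₂⟩ := not_or.1 hc
  obtain ⟨-, him⟩ := Complex.mem_slitPlane_iff.not.1 h₁ |> not_or.1
  exact ⟨c.1.re, Prod.ext (Complex.ext rfl (not_not.1 him)) (not_not.1 h₂)⟩

theorem re_add_norm_nonneg (z : ℂ) : 0 ≤ z.re + ‖z‖ := by
  linarith [neg_abs_le z.re, z.abs_re_le_norm]

theorem re_add_norm_pos {z : ℂ} (hz : z ∈ Complex.slitPlane) : 0 < z.re + ‖z‖ := by
  rcases hz with hz | hz
  · positivity
  · linarith [neg_abs_le z.re, Complex.abs_re_lt_norm.2 hz]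

/-- The coefficient of the first coordinate in `pivotForm`. -/
noncomputable def headCoeff (c : ℂ × E) : ℂ := (conj c.1 + ‖c.1‖ + ‖c.2‖ ^ 2) / 2

/-- The coefficient of the inner product in `pivotForm`. -/
noncomputable def tailCoeff (c : ℂ × E) : ℂ := (1 + ‖c.1‖) / 2

/-- The value at `c` of the functional `pivotForm c`. -/
noncomputable def pivot (c : ℂ × E) : ℂ := headCoeff c * c.1 + tailCoeff c * ‖c.2‖ ^ 2

theorem headCoeff_ne_zero {c : ℂ × E} (hc : c ∈ slitDomain E) : headCoeff c ≠ 0 := by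
  have hre : (headCoeff c).re = (c.1.re + ‖c.1‖ + ‖c.2‖ ^ 2) / 2 := by
    simp [headCoeff, ← Complex.ofReal_pow]
  refine fun h ↦ (?_ : 0 < (headCoeff c).re).ne' (by simp [h])
  have := re_add_norm_nonneg c.1
  rw [hre]
  rcases hc with hc | hc
  · have := re_add_norm_pos hc
    positivity
  · positivity

theorem re_pivot (c : ℂ × E) :
    (pivot c).re = (‖c.1‖ * (c.1.re + ‖c.1‖) + ‖c.2‖ ^ 2 * (1 + (c.1.re + ‖c.1‖))) / 2 := by
  have h : c.1.re * c.1.re + c.1.im * c.1.im = ‖c.1‖ ^ 2 := by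
    rw [← Complex.normSq_apply, Complex.normSq_eq_norm_sq]
  simp [pivot, headCoeff, tailCoeff, ← Complex.ofReal_pow]
  linear_combination h / 2

theorem re_pivot_pos {c : ℂ × E} (hc : c ∈ slitDomain E) : 0 < (pivot c).re := by
  have := re_add_norm_nonneg c.1
  rw [re_pivot]
  rcases hc with hc | hc
  · have := re_add_norm_pos hc
    have := norm_pos_iff.2 (Complex.slitPlane_ne_zero hc)
    positivity
  · positivity

theorem pivot_ne_zero {c : ℂ × E} (hc : c ∈ slitDomain E) : pivot c ≠ 0 :=
  fun h ↦ (re_pivot_pos hc).ne' (by simp [h])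

variable [InnerProductSpace ℂ E]

/-- A linear form that does not vanish at `c` when `c` lies in the slit domain. -/
noncomputable def pivotForm (c : ℂ × E) : ℂ × E →ₗ[ℂ] ℂ :=
  headCoeff c • .fst ℂ ℂ E + tailCoeff c • (innerₛₗ ℂ c.2).comp (.snd ℂ ℂ E)

theorem pivotForm_apply (c x : ℂ × E) :
    pivotForm c x = headCoeff c * x.1 + tailCoeff c * inner ℂ c.2 x.2 := rfl

theorem pivotForm_self (c : ℂ × E) : pivotForm c c = pivot c := by
  simp [pivotForm_apply, pivot, inner_self_eq_norm_sq_to_K]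

/-- A linear map depending continuously on `c`, which is the identity for `c = (1, 0)` and, on the
slit domain, an automorphism moving `c` to a multiple of `(1, 0)`. -/
noncomputable def straighten (c : ℂ × E) : ℂ × E →ₗ[ℂ] ℂ × E :=
  (pivotForm c).prod (pivot c • .snd ℂ ℂ E - (pivotForm c).smulRight c.2)

theorem straighten_apply (c x : ℂ × E) :
    straighten c x = (pivotForm c x, pivot c • x.2 - pivotForm c x • c.2) := rfl

theorem straighten_self (c : ℂ × E) : straighten c c = (pivot c, 0) := by
  simp [straighten_apply, pivotForm_self]

theorem straighten_one_zero (x : ℂ × E) : straighten (1, 0) x = x := by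
  simp [straighten_apply, pivotForm_apply, pivot, headCoeff, tailCoeff]

theorem ker_straighten {c : ℂ × E} (hc : c ∈ slitDomain E) : LinearMap.ker (straighten c) = ⊥ := by
  refine LinearMap.ker_eq_bot'.2 fun x hx ↦ ?_
  obtain ⟨hform, htail⟩ := Prod.ext_iff.1 hx
  have hx₂ : x.2 = 0 := by
    simpa [straighten_apply, show pivotForm c x = 0 from hform, pivot_ne_zero hc] using htail
  have hx₁ : x.1 = 0 := by
    simpa [straighten_apply, pivotForm_apply, hx₂, headCoeff_ne_zero hc] using hform
  exact Prod.ext hx₁ hx₂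

theorem continuous_straighten {Z : Type*} [TopologicalSpace Z] {f g : Z → ℂ × E}
    (hf : Continuous f) (hg : Continuous g) : Continuous fun z ↦ straighten (f z) (g z) := by
  simp only [straighten_apply, pivotForm_apply, pivot, headCoeff, tailCoeff]
  fun_prop

end Straightening

section ColumnReduction

theorem linearIndependent_iff_snd_succ {K E : Type*} [Field K] [AddCommGroup E] [Module K E]
    {n : ℕ} {A : Fin (n + 1) → K × E} {p : K} (hp : p ≠ 0) (h₀ : A 0 = (p, 0)) :
    LinearIndependent K A ↔ LinearIndependent K fun l : Fin n ↦ (A l.succ).2 := by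
  have hker : LinearMap.ker (LinearMap.snd K K E) = Submodule.span K {A 0} := by
    ext ⟨a, v⟩
    rw [h₀, Submodule.mem_span_singleton]
    constructor
    · rintro rfl
      exact ⟨a / p, by simp [hp]⟩
    · rintro ⟨b, h⟩
      simpa using congr($h.2).symm
  have hA₀ : A 0 ≠ 0 := by simp [h₀, hp]
  rw [linearIndependent_finSucc, ← Submodule.disjoint_span_singleton' hA₀, ← hker]
  exact ⟨fun h ↦ h.1.map h.2,
    fun h ↦ ⟨.of_comp (.snd K K E) h, Submodule.range_ker_disjoint h⟩⟩

variable {V : Type*} {D : Set V} {n : ℕ}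

/-- The pairs `(A, v)` such that the frame `A` is nondegenerate or `v` lies outside of `D`. -/
def frameOrCompl (E : Type*) [AddCommGroup E] [Module ℂ E] (n : ℕ) (D : Set V) :
    Set ((Fin n → E) × V) :=
  {p | LinearIndependent ℂ p.1 ∨ p.2 ∉ D}

/-- The open subset of `frameOrCompl (ℂ × E) (n + 1) D` on which `straighten` can be applied to the
first vector of a frame. -/
def slitFrameOrCompl (E : Type*) [AddCommGroup E] [Module ℂ E] (n : ℕ) (D : Set V) :
    Set ((Fin (n + 1) → ℂ × E) × V) :=
  {p | (LinearIndependent ℂ p.1 ∧ p.1 0 ∈ slitDomain E) ∨ p.2 ∉ D}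

/-- The frame `(1, 0), (0, B₀), (0, B₁), …`. -/
def stabilizeFrame {E : Type*} [Zero E] (B : Fin n → E) : Fin (n + 1) → ℂ × E :=
  Fin.cons (1, 0) fun l ↦ (0, B l)

@[simp]
theorem stabilizeFrame_zero {E : Type*} [Zero E] (B : Fin n → E) :
    stabilizeFrame B 0 = (1, 0) := rfl

@[simp]
theorem stabilizeFrame_succ {E : Type*} [Zero E] (B : Fin n → E) (l : Fin n) :
    stabilizeFrame B l.succ = (0, B l) := rfl

theorem continuous_stabilizeFrame {E : Type*} [Zero E] [TopologicalSpace E] :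
    Continuous (stabilizeFrame : (Fin n → E) → Fin (n + 1) → ℂ × E) := by
  refine continuous_pi fun l ↦ ?_
  cases l using Fin.cases with
  | zero => exact continuous_const
  | succ l => exact continuous_const.prodMk (continuous_apply l)

theorem linearIndependent_stabilizeFrame {E : Type*} [AddCommGroup E] [Module ℂ E]
    {B : Fin n → E} (hB : LinearIndependent ℂ B) : LinearIndependent ℂ (stabilizeFrame B) :=
  (linearIndependent_iff_snd_succ one_ne_zero (stabilizeFrame_zero B)).2 hB

theorem slitFrameOrCompl_subset (E : Type*) [AddCommGroup E] [Module ℂ E] (n : ℕ) (D : Set V) :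
    slitFrameOrCompl E n D ⊆ frameOrCompl (ℂ × E) (n + 1) D :=
  fun _ hp ↦ hp.imp_left And.left

section OpenSets

variable {E : Type*} [NormedAddCommGroup E] [NormedSpace ℂ E] [TopologicalSpace V]

theorem isOpen_frameOrCompl (hD : IsClosed D) : IsOpen (frameOrCompl E n D) :=
  (isOpen_setOfPred_linearIndependent.preimage continuous_fst).union
    (hD.isOpen_compl.preimage continuous_snd)

theorem isOpen_slitFrameOrCompl (hD : IsClosed D) : IsOpen (slitFrameOrCompl E n D) := by
  have hhead : Continuous fun p : (Fin (n + 1) → ℂ × E) × V ↦ p.1 0 := by fun_prop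
  exact ((isOpen_setOfPred_linearIndependent.preimage continuous_fst).inter
    (isOpen_slitDomain.preimage hhead)).union (hD.isOpen_compl.preimage continuous_snd)

end OpenSets

theorem c1DimLE_frameOrCompl_diff_slitFrameOrCompl {E : Type*} [NormedAddCommGroup E]
    [NormedSpace ℂ E] [FiniteDimensional ℂ E] [NormedAddCommGroup V] [NormedSpace ℝ V] {d : ℕ}
    (hD : C1DimLE D d) : C1DimLE (frameOrCompl (ℂ × E) (n + 1) D \ slitFrameOrCompl E n D)
      (1 + n * Module.finrank ℝ (ℂ × E) + d) := by
  have hslit : C1DimLE {A : Fin (n + 1) → ℂ × E | A 0 ∉ slitDomain E}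
      (1 + n * Module.finrank ℝ (ℂ × E)) := by
    refine .of_param (ι := Unit) (F := ℝ × (Fin n → ℂ × E))
      (p := fun _ v ↦ Fin.cons ((v.1 : ℂ), 0) v.2) (by simp [Module.finrank_pi_fintype])
      (fun _ ↦ contDiff_pi.2 fun l ↦ ?_) fun A hA ↦ ?_
    · cases l using Fin.cases with
      | zero => exact (Complex.ofRealCLM.contDiff.comp contDiff_fst).prodMk contDiff_const
      | succ l => exact (contDiff_apply ℝ (ℂ × E) l).comp contDiff_snd
    · obtain ⟨t, ht⟩ := exists_ofReal_of_notMem_slitDomain hA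
      exact ⟨(), (t, Fin.tail A), by simp [← ht]⟩
  refine (hslit.prod hD).mono ?_
  rintro ⟨A, v⟩ ⟨hW, hslit⟩
  obtain ⟨hA, hv⟩ := not_or.1 hslit
  exact ⟨fun h ↦ hA ⟨hW.resolve_right hv, h⟩, not_not.1 hv⟩

variable {E : Type*} [NormedAddCommGroup E] [InnerProductSpace ℂ E]

/-- The frame obtained from `A` by straightening its first vector, which is then dropped, and
projecting the others to `E`. -/
noncomputable def reduceFrame (A : Fin (n + 1) → ℂ × E) : Fin n → E :=
  fun l ↦ (straighten (A 0) (A l.succ)).2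

theorem continuous_reduceFrame :
    Continuous (reduceFrame : (Fin (n + 1) → ℂ × E) → Fin n → E) :=
  continuous_pi fun l ↦ continuous_snd.comp
    (continuous_straighten (continuous_apply 0) (continuous_apply l.succ))

theorem reduceFrame_stabilizeFrame (B : Fin n → E) : reduceFrame (stabilizeFrame B) = B :=
  funext fun _ ↦ congrArg Prod.snd (straighten_one_zero _)

theorem linearIndependent_reduceFrame {A : Fin (n + 1) → ℂ × E} (hA : LinearIndependent ℂ A)
    (h₀ : A 0 ∈ slitDomain E) : LinearIndependent ℂ (reduceFrame A) :=
  (linearIndependent_iff_snd_succ (A := fun l ↦ straighten (A 0) (A l)) (pivot_ne_zero h₀)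
    (straighten_self _)).1 (hA.map' _ (ker_straighten h₀))

section SlitMaps

variable [TopologicalSpace V]

/-- Stabilization of frames, as a map with values in the slit domain. -/
def stabilizeSlit (E : Type*) [NormedAddCommGroup E] [NormedSpace ℂ E] (n : ℕ) (D : Set V) :
    C(frameOrCompl E n D, slitFrameOrCompl E n D) where
  toFun p := ⟨(stabilizeFrame p.1.1, p.1.2), p.2.imp_left fun h ↦
    ⟨linearIndependent_stabilizeFrame h, .inl (by simp [stabilizeFrame])⟩⟩
  continuous_toFun := .subtype_mk ((continuous_stabilizeFrame.comp
    (continuous_fst.comp continuous_subtype_val)).prodMk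
      (continuous_snd.comp continuous_subtype_val)) _

/-- The retraction of the slit domain onto the stabilized frames. -/
noncomputable def reduceSlit (E : Type*) [NormedAddCommGroup E] [InnerProductSpace ℂ E] (n : ℕ)
    (D : Set V) : C(slitFrameOrCompl E n D, frameOrCompl E n D) where
  toFun p := ⟨(reduceFrame p.1.1, p.1.2), p.2.imp_left fun h ↦
    linearIndependent_reduceFrame h.1 h.2⟩
  continuous_toFun := .subtype_mk ((continuous_reduceFrame.comp
    (continuous_fst.comp continuous_subtype_val)).prodMk
      (continuous_snd.comp continuous_subtype_val)) _

theorem reduceSlit_comp_stabilizeSlit :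
    (reduceSlit E n D).comp (stabilizeSlit E n D) = .id _ :=
  ContinuousMap.ext fun p ↦ Subtype.ext (Prod.ext (reduceFrame_stabilizeFrame p.1.1) rfl)

/-- The map straightening the frames with respect to their first vectors. -/
noncomputable def straightenSlit (E : Type*) [NormedAddCommGroup E] [InnerProductSpace ℂ E] (n : ℕ)
    (D : Set V) : C(slitFrameOrCompl E n D, frameOrCompl (ℂ × E) (n + 1) D) where
  toFun p := ⟨(fun l ↦ straighten (p.1.1 0) (p.1.1 l), p.1.2), p.2.imp_left fun h ↦
    h.1.map' _ (ker_straighten h.2)⟩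
  continuous_toFun := .subtype_mk ((continuous_pi fun _ ↦
    continuous_straighten (by fun_prop) (by fun_prop)).prodMk (by fun_prop)) _

theorem straightenSlit_stabilizeSlit (p : frameOrCompl E n D) :
    straightenSlit E n D (stabilizeSlit E n D p) =
      ContinuousMap.inclusion (slitFrameOrCompl_subset E n D) (stabilizeSlit E n D p) :=
  Subtype.ext (Prod.ext (funext fun _ ↦ straighten_one_zero _) rfl)

theorem inclusion_homotopicRel_straightenSlit (x : frameOrCompl E n D) :
    (ContinuousMap.inclusion (slitFrameOrCompl_subset E n D)).HomotopicRel
      (straightenSlit E n D) {stabilizeSlit E n D x} := by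
  let c (q : I × slitFrameOrCompl E n D) : ℂ × E := (1, 0) + (q.1 : ℝ) • (q.2.1.1 0 - (1, 0))
  have hc : Continuous c := by fun_prop
  refine homotopicRel_of_forall_mem
    (fun q ↦ (fun l ↦ straighten (c q) (q.2.1.1 l), q.2.1.2))
    ((continuous_pi fun _ ↦ continuous_straighten hc (by fun_prop)).prodMk (by fun_prop))
    (fun q ↦ ?_) (fun p ↦ ?_) (fun p ↦ ?_) ?_
  · exact q.2.2.imp_left fun h ↦ h.1.map' _ (ker_straighten
      (starConvex_slitDomain.add_smul_sub_mem h.2 q.1.2.1 q.1.2.2))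
  · simp [c, straighten_one_zero, ContinuousMap.inclusion]
  · simp [c, straightenSlit]
  · rintro t _ rfl
    have hct : c (t, stabilizeSlit E n D x) = (1, 0) := by
      simp [c, stabilizeSlit]
    simp [hct, straighten_one_zero, ContinuousMap.inclusion]

end SlitMaps

variable [NormedAddCommGroup V] [NormedSpace ℝ V]

theorem straightenSlit_homotopicRel_stabilizeSlit_reduceSlit (x : frameOrCompl E n D) :
    (straightenSlit E n D).HomotopicRel ((ContinuousMap.inclusion
      (slitFrameOrCompl_subset E n D)).comp ((stabilizeSlit E n D).comp (reduceSlit E n D)))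
      {stabilizeSlit E n D x} := by
  refine homotopicRel_of_segment_subset ?_ ?_
  · rintro p _ ⟨a, b, ha, hb, hab, rfl⟩
    refine p.2.imp (fun h ↦ ?_) fun h ↦ ?_
    · have hre : 0 < (a * pivot (p.1.1 0) + b).re := by
        simpa using convex_halfSpace_re_gt 0 (re_pivot_pos h.2) (y := 1) (by simp) ha hb hab
      have hne : a * pivot (p.1.1 0) + b ≠ 0 := fun h₀ ↦ by simp [h₀] at hre
      refine (linearIndependent_iff_snd_succ hne ?_).2 ?_
      · simp [straightenSlit, stabilizeSlit, ContinuousMap.inclusion, straighten_self]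
      · have hframe : (fun l : Fin n ↦ ((a • (straightenSlit E n D p : (Fin (n + 1) → ℂ × E) × V) +
            b • ((stabilizeSlit E n D (reduceSlit E n D p)) : (Fin (n + 1) → ℂ × E) × V)).1
              l.succ).2) = reduceFrame p.1.1 := by
          ext l
          simp [straightenSlit, stabilizeSlit, reduceSlit, reduceFrame, ← add_smul, hab]
        exact hframe ▸ linearIndependent_reduceFrame h.1 h.2
    · simpa [straightenSlit, stabilizeSlit, ContinuousMap.inclusion, reduceSlit, ← add_smul, hab]
        using h
  · rintro _ rfl
    have hreduce : reduceSlit E n D (stabilizeSlit E n D x) = x :=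
      DFunLike.congr_fun reduceSlit_comp_stabilizeSlit x
    simp [straightenSlit_stabilizeSlit, hreduce]

theorem homotopyGroupMap_stabilizeSlit_bijective {N : Type*} [DecidableEq N] [Nonempty N]
    (x : frameOrCompl E n D)
    (hi : Function.Injective (homotopyGroupMap N
      (.inclusion (slitFrameOrCompl_subset E n D)) (x := stabilizeSlit E n D x) rfl)) :
    Function.Bijective (homotopyGroupMap N (stabilizeSlit E n D) (x := x) rfl) := by
  have hreduce : reduceSlit E n D (stabilizeSlit E n D x) = x :=
    DFunLike.congr_fun reduceSlit_comp_stabilizeSlit x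
  have hincl : homotopyGroupMap N (.inclusion (slitFrameOrCompl_subset E n D)) rfl = _ :=
    homotopyGroupMap_congr ((inclusion_homotopicRel_straightenSlit x).trans
      (straightenSlit_homotopicRel_stabilizeSlit_reduceSlit x)) rfl (by simp [hreduce])
  rw [homotopyGroupMap_comp (by simp [hreduce]) rfl, homotopyGroupMap_comp hreduce rfl] at hincl
  exact ⟨Function.LeftInverse.injective (DFunLike.congr_fun
    (homotopyGroupMap_comp_eq_id rfl hreduce reduceSlit_comp_stabilizeSlit)),
    fun a ↦ ⟨_, hi (DFunLike.congr_fun hincl a).symm⟩⟩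

theorem nonempty_pi_stabilize_mulEquiv [FiniteDimensional ℂ E] [FiniteDimensional ℝ V]
    (hD : IsClosed D) {d : ℕ} (hd : C1DimLE D d) {N : Type*} [DecidableEq N] [Nonempty N]
    [Fintype N] (h : Fintype.card N + 1 + d ≤ 2 * Module.finrank ℂ E + Module.finrank ℝ V)
    (x : frameOrCompl E n D) :
    Nonempty (HomotopyGroup N (frameOrCompl E n D) x ≃*
      HomotopyGroup N (frameOrCompl (ℂ × E) (n + 1) D)
        (ContinuousMap.inclusion (slitFrameOrCompl_subset E n D) (stabilizeSlit E n D x))) := by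
  have hframes : Module.finrank ℝ ((Fin (n + 1) → ℂ × E) × V) =
      (n + 1) * Module.finrank ℝ (ℂ × E) + Module.finrank ℝ V := by
    simp [Module.finrank_pi_fintype]
  have hE : Module.finrank ℝ (ℂ × E) = 2 + 2 * Module.finrank ℂ E := by
    rw [finrank_real_of_complex, Module.finrank_prod, Module.finrank_self]
    ring
  have hincl := homotopyGroupMap_inclusion_bijective (N := N) (slitFrameOrCompl_subset E n D)
    (isOpen_frameOrCompl hD) (isOpen_slitFrameOrCompl hD)
    (c1DimLE_frameOrCompl_diff_slitFrameOrCompl hd) (by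
      rw [hframes, hE]
      lia) (x := stabilizeSlit E n D x) rfl
  exact ⟨(MulEquiv.ofBijective _ (homotopyGroupMap_stabilizeSlit_bijective x hincl.1)).trans
    (.ofBijective _ hincl)⟩

end ColumnReduction

section FrameReduction

theorem exists_linearEquiv_apply_eq {K E E' ι : Type*} [Field K] [AddCommGroup E] [Module K E]
    [AddCommGroup E'] [Module K E'] [FiniteDimensional K E] [FiniteDimensional K E'] [Finite ι]
    (h : Module.finrank K E = Module.finrank K E') {A : ι → E} {A' : ι → E'}
    (hA : LinearIndependent K A) (hA' : LinearIndependent K A') :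
    ∃ L : E ≃ₗ[K] E', ∀ i, L (A i) = A' i := by
  let e : E ≃ₗ[K] E' := .ofFinrankEq E E' h
  have heA : LinearIndependent K (e ∘ A) := hA.map' (e : E →ₗ[K] E') e.ker
  obtain ⟨g, hg⟩ := Submodule.exists_linearEquiv_restrict_eq
    ((Module.Basis.span heA).equiv (Module.Basis.span hA') (Equiv.refl _))
  refine ⟨e.trans g, fun i ↦ ?_⟩
  have hi := hg (Module.Basis.span heA i)
  rw [Module.Basis.equiv_apply] at hi
  simpa [Module.Basis.span_apply] using hi.symm

variable {E E' V : Type*} [NormedAddCommGroup E] [NormedSpace ℂ E] [FiniteDimensional ℂ E]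
  [NormedAddCommGroup E'] [NormedSpace ℂ E'] [FiniteDimensional ℂ E'] {n n' : ℕ} {D : Set V}

theorem nonempty_pi_frameOrCompl_mulEquiv_of_finrank_eq [TopologicalSpace V] {N : Type*}
    [DecidableEq N] [Nonempty N] (h : Module.finrank ℂ E = Module.finrank ℂ E') {A : Fin n → E}
    {A' : Fin n → E'} (hA : LinearIndependent ℂ A) (hA' : LinearIndependent ℂ A') (v : V) :
    Nonempty (HomotopyGroup N (frameOrCompl E n D) ⟨(A, v), .inl hA⟩ ≃*
      HomotopyGroup N (frameOrCompl E' n D) ⟨(A', v), .inl hA'⟩) := by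
  obtain ⟨L, hL⟩ := exists_linearEquiv_apply_eq h hA hA'
  let φ : (Fin n → E) × V ≃ₜ (Fin n → E') × V :=
    (Homeomorph.piCongrRight fun _ ↦ L.toContinuousLinearEquiv.toHomeomorph).prodCongr (.refl V)
  have hφ (p : (Fin n → E) × V) : p ∈ frameOrCompl E n D ↔ φ p ∈ frameOrCompl E' n D :=
    or_congr_left ((L : E →ₗ[ℂ] E').linearIndependent_iff L.ker).symm
  exact ⟨homotopyGroupCongr (φ.subtype hφ) (Subtype.ext (Prod.ext (funext hL) rfl))⟩

variable [NormedAddCommGroup V] [NormedSpace ℝ V] [FiniteDimensional ℝ V] {N : Type*}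
  [DecidableEq N] [Nonempty N] [Fintype N]

theorem nonempty_pi_frameOrCompl_mulEquiv_euclideanSpace (hD : IsClosed D) {d : ℕ}
    (hd : C1DimLE D d)
    (h : Fintype.card N + 1 + d ≤ 2 * Module.finrank ℂ E + Module.finrank ℝ V)
    {A : Fin n → E} (hA : LinearIndependent ℂ A) (v : V) (q : ℕ) :
    ∀ {A' : Fin (n + q) → EuclideanSpace ℂ (Fin (Module.finrank ℂ E + q))}
      (hA' : LinearIndependent ℂ A'),
      Nonempty (HomotopyGroup N (frameOrCompl E n D) ⟨(A, v), .inl hA⟩ ≃*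
        HomotopyGroup N (frameOrCompl _ (n + q) D) ⟨(A', v), .inl hA'⟩) := by
  have hn : n ≤ Module.finrank ℂ E := by simpa using hA.fintype_card_le_finrank
  induction q with
  | zero => exact fun hA' ↦ nonempty_pi_frameOrCompl_mulEquiv_of_finrank_eq (by simp) hA hA' v
  | succ q ih =>
    intro A' hA'
    let F := EuclideanSpace ℂ (Fin (Module.finrank ℂ E + q))
    obtain ⟨B, hB⟩ : ∃ B : Fin (n + q) → F, LinearIndependent ℂ B :=
      exists_linearIndependent_of_le_finrank (by simpa [F] using hn)
    obtain ⟨reduce⟩ := ih hB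
    obtain ⟨stabilize⟩ := nonempty_pi_stabilize_mulEquiv (E := F) (N := N) hD hd
      (h.trans (by simp [F])) ⟨(B, v), .inl hB⟩
    obtain ⟨move⟩ := nonempty_pi_frameOrCompl_mulEquiv_of_finrank_eq (N := N) (D := D)
      (E := ℂ × F) (E' := EuclideanSpace ℂ (Fin (Module.finrank ℂ E + (q + 1))))
      (by simp [F]; lia) (linearIndependent_stabilizeFrame hB) hA' v
    exact ⟨(reduce.trans stabilize).trans move⟩

theorem nonempty_pi_frameOrCompl_mulEquiv (hD : IsClosed D) {d : ℕ} (hd : C1DimLE D d)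
    (h : Fintype.card N + 1 + d ≤ 2 * Module.finrank ℂ E + Module.finrank ℝ V)
    (hn : n ≤ n') (hE : Module.finrank ℂ E' + n = Module.finrank ℂ E + n') {A : Fin n → E}
    (hA : LinearIndependent ℂ A) {A' : Fin n' → E'} (hA' : LinearIndependent ℂ A') (v : V) :
    Nonempty (HomotopyGroup N (frameOrCompl E n D) ⟨(A, v), .inl hA⟩ ≃*
      HomotopyGroup N (frameOrCompl E' n' D) ⟨(A', v), .inl hA'⟩) := by
  obtain ⟨q, rfl⟩ := Nat.exists_eq_add_of_le hn
  have hE' : Module.finrank ℂ E' = Module.finrank ℂ E + q := by lia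
  obtain ⟨B, hB⟩ : ∃ B : Fin (n + q) → EuclideanSpace ℂ (Fin (Module.finrank ℂ E + q)),
      LinearIndependent ℂ B :=
    exists_linearIndependent_of_le_finrank (by
      simpa [hE'] using hA'.fintype_card_le_finrank)
  obtain ⟨reduce⟩ := nonempty_pi_frameOrCompl_mulEquiv_euclideanSpace hD hd h hA v q hB
  obtain ⟨move⟩ := nonempty_pi_frameOrCompl_mulEquiv_of_finrank_eq (N := N) (D := D)
    (by simp [hE']) hB hA' v
  exact ⟨reduce.trans move⟩

end FrameReduction

section Tuples

/-- The pairs `(p, v)`, with `p` a tuple of frames and `v` a vector, such that at least one of the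
frames is nondegenerate or `v` is nonzero. The vector makes room for an induction on the number of
frames. -/
def tupleOrNeZero {s : ℕ} (E : Fin s → Type*) [∀ i, AddCommGroup (E i)] [∀ i, Module ℂ (E i)]
    (q : Fin s → ℕ) (V : Type*) [Zero V] : Set ((∀ i, Fin (q i + 1) → E i) × V) :=
  {p | (∃ i, LinearIndependent ℂ (p.1 i)) ∨ p.2 ≠ 0}

/-- The pairs formed by a tuple of degenerate frames and the zero vector. -/
def degenerateTuples {s : ℕ} (E : Fin s → Type*) [∀ i, AddCommGroup (E i)]
    [∀ i, Module ℂ (E i)] (q : Fin s → ℕ) (V : Type*) [Zero V] :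
    Set ((∀ i, Fin (q i + 1) → E i) × V) :=
  (Set.univ.pi fun _ ↦ {A | ¬ LinearIndependent ℂ A}) ×ˢ {0}

theorem notMem_degenerateTuples_iff {s : ℕ} {E : Fin s → Type*} [∀ i, AddCommGroup (E i)]
    [∀ i, Module ℂ (E i)] {q : Fin s → ℕ} {V : Type*} [Zero V]
    {p : (∀ i, Fin (q i + 1) → E i) × V} :
    p ∉ degenerateTuples E q V ↔ p ∈ tupleOrNeZero E q V := by
  simp [degenerateTuples, tupleOrNeZero, Set.mem_prod, imp_iff_not_or]

variable {V : Type*} [NormedAddCommGroup V]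

theorem isClosed_degenerateTuples {s : ℕ} {E : Fin s → Type*} [∀ i, NormedAddCommGroup (E i)]
    [∀ i, NormedSpace ℂ (E i)] {q : Fin s → ℕ} : IsClosed (degenerateTuples E q V) :=
  (isClosed_set_pi fun _ _ ↦ isOpen_setOfPred_linearIndependent.isClosed_compl).prod
    isClosed_singleton

theorem c1DimLE_degenerateTuples [NormedSpace ℝ V] {s : ℕ} {E : Fin s → Type*}
    [∀ i, NormedAddCommGroup (E i)] [∀ i, NormedSpace ℂ (E i)] [∀ i, FiniteDimensional ℂ (E i)]
    {q : Fin s → ℕ} : C1DimLE (degenerateTuples E q V)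
      (∑ i, (q i * Module.finrank ℝ (E i) + 2 * q i) + 0) :=
  (C1DimLE.pi fun i ↦ c1DimLE_not_linearIndependent (E i) (q i)).prod (c1DimLE_singleton 0)

/-- A tuple in `tupleOrNeZero` is formed by a first frame and a tail, one of which is
nondegenerate. -/
noncomputable def tupleOrNeZeroHomeomorph {s : ℕ} (E : Fin (s + 1) → Type*)
    [∀ i, NormedAddCommGroup (E i)] [∀ i, NormedSpace ℂ (E i)] (q : Fin (s + 1) → ℕ) (V : Type*)
    [NormedAddCommGroup V] :
    tupleOrNeZero E q V ≃ₜ frameOrCompl (E 0) (q 0 + 1)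
      (degenerateTuples (fun i : Fin s ↦ E i.succ) (fun i ↦ q i.succ) V) :=
  (((Fin.consEquivL ℂ fun i ↦ Fin (q i + 1) → E i).symm.toHomeomorph.prodCongr
    (.refl V)).trans (.prodAssoc _ _ _)).subtype fun p ↦ by
      simp only [frameOrCompl, Set.mem_ofPred_eq, notMem_degenerateTuples_iff, tupleOrNeZero,
        Fin.exists_fin_succ, or_assoc]
      rfl

/-- A frame consisting of a single vector can be absorbed into the vector part of
`tupleOrNeZero`. -/
noncomputable def frameOneHomeomorph {s : ℕ} (E : Fin s → Type*)
    [∀ i, NormedAddCommGroup (E i)] [∀ i, NormedSpace ℂ (E i)] (q : Fin s → ℕ) (F V : Type*)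
    [NormedAddCommGroup F] [NormedSpace ℂ F] [NormedAddCommGroup V] :
    frameOrCompl F 1 (degenerateTuples E q V) ≃ₜ tupleOrNeZero E q (F × V) :=
  (((Homeomorph.funUnique (Fin 1) F).prodCongr (.refl _)).trans
    { toFun p := (p.2.1, (p.1, p.2.2))
      invFun p := (p.2.1, (p.1, p.2.2)) : _ ≃ₜ _ }).subtype fun p ↦ by
      change _ ∨ p.2 ∉ _ ↔ _ ∨ (p.1 0, p.2.2) ≠ 0
      rw [notMem_degenerateTuples_iff, linearIndependent_unique_iff, ne_eq (p.1 0, p.2.2),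
        Prod.mk_eq_zero, not_and_or]
      exact or_left_comm

theorem frameOneHomeomorph_apply {s : ℕ} {E : Fin s → Type*}
    [∀ i, NormedAddCommGroup (E i)] [∀ i, NormedSpace ℂ (E i)] {q : Fin s → ℕ} {F V : Type*}
    [NormedAddCommGroup F] [NormedSpace ℂ F] [NormedAddCommGroup V]
    (x : frameOrCompl F 1 (degenerateTuples E q V)) :
    (frameOneHomeomorph E q F V x : _ × F × V) = (x.1.2.1, (x.1.1 0, x.1.2.2)) := rfl

variable {s : ℕ}

theorem finrank_tuples {E : Fin s → Type*} [∀ i, NormedAddCommGroup (E i)]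
    [∀ i, NormedSpace ℂ (E i)] [∀ i, FiniteDimensional ℂ (E i)] {k q : Fin s → ℕ}
    (hE : ∀ i, Module.finrank ℂ (E i) = k i + q i) :
    Module.finrank ℝ (∀ i, Fin (q i + 1) → E i) =
      ∑ i, (q i * Module.finrank ℝ (E i) + 2 * q i) + 2 * ∑ i, k i := by
  simp_rw [Module.finrank_pi_fintype, Finset.mul_sum, ← Finset.sum_add_distrib]
  refine Finset.sum_congr rfl fun i _ ↦ ?_
  rw [Finset.sum_const, Finset.card_univ, Fintype.card_fin, finrank_real_of_complex, hE]
  simp only [smul_eq_mul]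
  ring

theorem nonempty_pi_tupleOrNeZero_mulEquiv_int {E : Fin s → Type*} [∀ i, NormedAddCommGroup (E i)]
    [∀ i, NormedSpace ℂ (E i)] [∀ i, FiniteDimensional ℂ (E i)] {k q : Fin s → ℕ}
    (hE : ∀ i, Module.finrank ℂ (E i) = k i + q i) {V : Type*} [NormedAddCommGroup V]
    [NormedSpace ℝ V] [FiniteDimensional ℝ V] {j : ℕ}
    (hj : 2 * ∑ i, k i + Module.finrank ℝ V = j + 2) (x : tupleOrNeZero E q V)
    (hx : ∀ i, LinearIndependent ℂ (x.1.1 i)) :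
    Nonempty (HomotopyGroup (Fin (j + 1)) (tupleOrNeZero E q V) x ≃* Multiplicative ℤ) := by
  induction s generalizing V with
  | zero =>
    let φ : tupleOrNeZero E q V ≃ₜ ({0}ᶜ : Set V) :=
      (Homeomorph.uniqueProd _ V).subtype fun p ↦ by simp [tupleOrNeZero]
    obtain ⟨sphere⟩ := nonempty_pi_compl_zero_mulEquiv_int (by simpa using hj) (φ x)
    exact ⟨(homotopyGroupCongr φ rfl).trans sphere⟩
  | succ s ih =>
    rw [Fin.sum_univ_succ] at hj
    let tail : (∀ i : Fin s, Fin (q i.succ + 1) → E i.succ) × V := (fun i ↦ x.1.1 i.succ, x.1.2)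
    let F := EuclideanSpace ℂ (Fin (k 0))
    have hF : Module.finrank ℂ F = k 0 := finrank_euclideanSpace_fin
    have hk : q 0 + 1 ≤ k 0 + q 0 := by simpa [hE] using (hx 0).fintype_card_le_finrank
    obtain ⟨B, hB⟩ : ∃ B : Fin 1 → F, LinearIndependent ℂ B :=
      exists_linearIndependent_of_le_finrank (by rw [hF]; lia)
    obtain ⟨reduce⟩ := nonempty_pi_frameOrCompl_mulEquiv (N := Fin (j + 1))
      (isClosed_degenerateTuples (V := V)) c1DimLE_degenerateTuples (by
        rw [Module.finrank_prod, finrank_tuples fun i ↦ hE i.succ, Fintype.card_fin, hF]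
        lia) (Nat.le_add_left 1 (q 0)) (by rw [hF, hE]; lia) hB (hx 0)
      tail
    let φ := tupleOrNeZeroHomeomorph E q V
    let ψ := frameOneHomeomorph (fun i : Fin s ↦ E i.succ) (fun i ↦ q i.succ) F V
    obtain ⟨int⟩ := ih (V := F × V) (fun i ↦ hE i.succ)
      (by rw [Module.finrank_prod, finrank_real_of_complex, hF]; lia)
      (ψ ⟨(B, tail), .inl hB⟩) (fun i ↦ by
        rw [frameOneHomeomorph_apply]
        exact hx i.succ)
    exact ⟨((homotopyGroupCongr φ (x := x) rfl).trans reduce.symm).trans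
      ((homotopyGroupCongr ψ rfl).trans int)⟩

end Tuples

section BasePoint

/-- The tuples of frames at least one of which is nondegenerate. -/
def tupleStiefel {ι : Type*} (E : ι → Type*) [∀ i, AddCommGroup (E i)] [∀ i, Module ℂ (E i)]
    (n : ι → ℕ) : Set (∀ i, Fin (n i) → E i) :=
  {p | ∃ i, LinearIndependent ℂ (p i)}

/-- The shear `p ↦ p + θ (p i₀) • c` in directions `c` fixing the component `i₀`. -/
def shear {ι : Type*} {F : ι → Type*} [∀ i, AddCommGroup (F i)] [∀ i, Module ℝ (F i)]
    [∀ i, TopologicalSpace (F i)] [∀ i, IsTopologicalAddGroup (F i)]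
    [∀ i, ContinuousSMul ℝ (F i)] {i₀ : ι} (θ : C(F i₀, ℝ)) (c : ∀ i, F i) (hc : c i₀ = 0) :
    (∀ i, F i) ≃ₜ ∀ i, F i where
  toFun p := p + θ (p i₀) • c
  invFun p := p - θ (p i₀) • c
  left_inv p := by simp [hc]
  right_inv p := by simp [hc]

theorem shear_apply {ι : Type*} {F : ι → Type*} [∀ i, AddCommGroup (F i)] [∀ i, Module ℝ (F i)]
    [∀ i, TopologicalSpace (F i)] [∀ i, IsTopologicalAddGroup (F i)]
    [∀ i, ContinuousSMul ℝ (F i)] {i₀ : ι} (θ : C(F i₀, ℝ)) (c : ∀ i, F i) (hc : c i₀ = 0)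
    (p : ∀ i, F i) : shear θ c hc p = p + θ (p i₀) • c := rfl

/- Frames other than the `i₀`-th are moved by a factor that vanishes where the `i₀`-th frame is
degenerate, so the set of tuples with some nondegenerate frame is preserved. -/
theorem exists_homeomorph_forall_linearIndependent {ι : Type*} {E : ι → Type*}
    [∀ i, NormedAddCommGroup (E i)] [∀ i, NormedSpace ℂ (E i)] {n : ι → ℕ}
    (hn : ∀ i, n i ≤ Module.finrank ℂ (E i)) (x : tupleStiefel E n) :
    ∃ φ : tupleStiefel E n ≃ₜ tupleStiefel E n, ∀ i, LinearIndependent ℂ ((φ x).1 i) := by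
  obtain ⟨x, i₀, hx⟩ := x
  have exists_translate (i : ι) :
      ∃ c, LinearIndependent ℂ (x i + c) ∧ (LinearIndependent ℂ (x i) → c = 0) := by
    by_cases hi : LinearIndependent ℂ (x i)
    · exact ⟨0, by rwa [add_zero], fun _ ↦ rfl⟩
    · obtain ⟨z, hz⟩ := exists_linearIndependent_of_le_finrank (hn i)
      exact ⟨z - x i, by rwa [add_sub_cancel], fun h ↦ absurd h hi⟩
  choose c hxc hc using exists_translate
  obtain ⟨θ, hθ₀, hθ₁, -⟩ := exists_continuous_zero_one_of_isClosed
    (isOpen_setOfPred_linearIndependent (𝕜 := ℂ)).isClosed_compl (isClosed_singleton (x := x i₀))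
    (Set.disjoint_singleton_right.2 (not_not.2 hx))
  let ψ : (∀ i, Fin (n i) → E i) ≃ₜ (∀ i, Fin (n i) → E i) := shear θ c (hc i₀ hx)
  have hψ (p : ∀ i, Fin (n i) → E i) : ψ p = p + θ (p i₀) • c := shear_apply ..
  have hmem (p : ∀ i, Fin (n i) → E i) : p ∈ tupleStiefel E n ↔ ψ p ∈ tupleStiefel E n := by
    by_cases hp : LinearIndependent ℂ (p i₀)
    · exact iff_of_true ⟨i₀, hp⟩ ⟨i₀, by simpa [hψ, hc i₀ hx] using hp⟩
    · have hθp : θ (p i₀) = 0 := hθ₀ hp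
      rw [hψ, hθp, zero_smul, add_zero]
  have hψx : ψ x = x + c := by rw [hψ, show θ (x i₀) = 1 from hθ₁ rfl, one_smul]
  let φ : tupleStiefel E n ≃ₜ tupleStiefel E n := ψ.subtype hmem
  have hφ : (φ ⟨x, i₀, hx⟩).1 = x + c := hψx
  exact ⟨φ, fun i ↦ hφ ▸ hxc i⟩

theorem nonempty_pi_tupleStiefel_mulEquiv_int {s : ℕ} {E : Fin s → Type*}
    [∀ i, NormedAddCommGroup (E i)] [∀ i, NormedSpace ℂ (E i)] [∀ i, FiniteDimensional ℂ (E i)]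
    {k q : Fin s → ℕ} (hk : ∀ i, 1 ≤ k i) (hE : ∀ i, Module.finrank ℂ (E i) = k i + q i) {j : ℕ}
    (hj : 2 * ∑ i, k i = j + 2) (x : tupleStiefel E fun i ↦ q i + 1) :
    Nonempty (HomotopyGroup (Fin (j + 1)) (tupleStiefel E fun i ↦ q i + 1) x ≃*
      Multiplicative ℤ) := by
  obtain ⟨φ, hφ⟩ := exists_homeomorph_forall_linearIndependent (n := fun i ↦ q i + 1)
    (fun i ↦ by rw [hE]; linarith [hk i]) x
  let ψ : tupleStiefel E (fun i ↦ q i + 1) ≃ₜ tupleOrNeZero E q (Fin 0 → ℝ) :=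
    (Homeomorph.prodUnique _ _).symm.subtype fun p ↦
      (or_iff_left (not_not.2 (Subsingleton.elim _ _))).symm
  obtain ⟨int⟩ := nonempty_pi_tupleOrNeZero_mulEquiv_int hE (by simpa using hj) (ψ (φ x)) hφ
  exact ⟨(homotopyGroupCongr (φ.trans ψ) rfl).trans int⟩

end BasePoint

section Matrices

theorem rank_eq_iff_linearIndependent_col {K ι : Type*} [Field K] [Finite ι] {n : ℕ}
    {A : Matrix ι (Fin n) K} : A.rank = n ↔ LinearIndependent K A.col := by
  rw [linearIndependent_iff_card_eq_finrank_span, Set.finrank, ← Matrix.rank_eq_finrank_span_cols,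
    Fintype.card_fin, eq_comm]

/-- The tuples of matrices at least one of which has full rank, as tuples of columns. -/
noncomputable def fullRankHomeomorph {ι : Type*} (m : ℕ) (n : ι → ℕ) :
    {A : (i : ι) → Matrix (Fin m) (Fin (n i)) ℂ // ∃ i, (A i).rank = n i} ≃ₜ
      tupleStiefel (fun _ : ι ↦ Fin m → ℂ) n :=
  (Homeomorph.piCongrRight fun i ↦
    { toFun A := A.col
      invFun A := .transpose (.of A)
      continuous_toFun := Continuous.matrix_transpose continuous_id
      continuous_invFun := Continuous.matrix_transpose continuous_id :
      Matrix (Fin m) (Fin (n i)) ℂ ≃ₜ (Fin (n i) → Fin m → ℂ)}).subtype fun _ ↦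
    exists_congr fun _ ↦ rank_eq_iff_linearIndependent_col

end Matrices

end TupleStiefel

/-- For `m ≥ 1` and positive integers `k₁, …, k_s ≤ m` with `k = Σ kᵢ`,
the homotopy group `π_{2k-1}` of the space `W_{m,𝐤}` of tuples `(A₁, …, A_s)` of complex
matrices, `Aᵢ` of size `m × (m - kᵢ + 1)`, such that some `Aᵢ` has full rank
`m - kᵢ + 1`, at any basepoint, is isomorphic to `ℤ`.
(The degree `2k - 1` is written `2k - 2 + 1`, which agrees with it since `k ≥ 1`
whenever the space is nonempty.) -/
theorem tupleStiefel_homotopyGroup_int (m s : ℕ) (hm : 1 ≤ m) (k : Fin s → ℕ)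
    (hk : ∀ i, 1 ≤ k i) (hkm : ∀ i, k i ≤ m)
    (x : {A : (i : Fin s) → Matrix (Fin m) (Fin (m - k i + 1)) ℂ //
        ∃ i, (A i).rank = m - k i + 1}) :
    Nonempty
      (HomotopyGroup (Fin (2 * (∑ i, k i) - 2 + 1))
          {A : (i : Fin s) → Matrix (Fin m) (Fin (m - k i + 1)) ℂ //
            ∃ i, (A i).rank = m - k i + 1} x
        ≃* Multiplicative ℤ) := by
  obtain ⟨i₀, -⟩ := x.2
  have hsum : 1 ≤ ∑ i, k i :=
    (hk i₀).trans (Finset.single_le_sum (fun i _ ↦ Nat.zero_le (k i)) (Finset.mem_univ i₀))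
  let φ := TupleStiefel.fullRankHomeomorph m fun i ↦ m - k i + 1
  obtain ⟨int⟩ := TupleStiefel.nonempty_pi_tupleStiefel_mulEquiv_int
    (E := fun _ ↦ Fin m → ℂ) (q := fun i ↦ m - k i) hk (fun i ↦ by simp [hkm i])
    (j := 2 * ∑ i, k i - 2) (by lia) (φ x)
  exact ⟨(TupleStiefel.homotopyGroupCongr φ rfl).trans int⟩
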